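/- A smooth projective curve C of genus 5 is trigonal (admits a degree-3 map to P¹) if and only if it can be represented as a plane quintic with exactly one singularity of delta invariant 1 (i.e., a node or an ordinary cusp). -/

import Mathlib

open Polynomial IntermediateField

noncomputable section

/-- The globally regular (Kähler) differentials of a one-dimensional function field K/k:
those ω ∈ Ω_{K/k} which, for every valuation subring A of K containing k (i.e. every
k-subalgebra A of K such that for each nonzero z ∈ K either z or z⁻¹ lies in A), lie in
the image of Ω_{A/k} → Ω_{K/k}.  For the function field of a smooth projective curve C
over an algebraically closed field k this is H⁰(C, Ω¹_C), whose k-dimension is the genus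
of C. -/
def RegularDifferentials (k K : Type*) [Field k] [Field K] [Algebra k K] :
    Set (KaehlerDifferential k K) :=
  {ω | ∀ A : Subalgebra k K, (∀ z : K, z ≠ 0 → z ∈ A ∨ z⁻¹ ∈ A) →
    ω ∈ Set.range (KaehlerDifferential.map k k A K)}

/-- C (given by its function field K over k) has genus 5: the space of globally regular
differentials has k-dimension 5. -/
def HasGenusFive (k K : Type*) [Field k] [Field K] [Algebra k K] : Prop :=
  Module.rank k (Submodule.span k (RegularDifferentials k K)) = 5

/-- C (given by its function field K over k) is trigonal: it admits a degree-3 map to P¹,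
i.e. there is x ∈ K transcendental over k with [K : k(x)] = 3. -/
def Trigonal (k K : Type*) [Field k] [Field K] [Algebra k K] : Prop :=
  ∃ x : K, Transcendental k x ∧
    Module.finrank (IntermediateField.adjoin k ({x} : Set K)) K = 3

/-- Dehomogenization of a ternary form at Z = 1. -/
def dehomZ (k : Type*) [CommRing k] (F : MvPolynomial (Fin 3) k) :
    MvPolynomial (Fin 2) k :=
  MvPolynomial.aeval
    (fun i : Fin 3 =>
      if i = 0 then MvPolynomial.X 0 else if i = 1 then MvPolynomial.X 1 else 1) F

/-- The plane projective curve F = 0 is singular at the point with homogeneous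
coordinates p. -/
def IsSingAt (k : Type*) [CommRing k] (F : MvPolynomial (Fin 3) k) (p : Fin 3 → k) :
    Prop :=
  MvPolynomial.eval p F = 0 ∧ ∀ i, MvPolynomial.eval p (MvPolynomial.pderiv i F) = 0

/-- The affine plane curve f = 0 has a node (an ordinary double point, locally xy = 0) at
the origin: f has no terms of degree < 2 there (assumed via the singularity condition) and
its quadratic part is a product of two non-proportional linear forms. -/
def NodeAtOrigin (k : Type*) [CommRing k] (f : MvPolynomial (Fin 2) k) : Prop :=
  ∃ l₁ l₂ : MvPolynomial (Fin 2) k, l₁.IsHomogeneous 1 ∧ l₂.IsHomogeneous 1 ∧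
    l₁ ≠ 0 ∧ l₂ ≠ 0 ∧ MvPolynomial.homogeneousComponent 2 f = l₁ * l₂ ∧
    ∀ c : k, l₂ ≠ c • l₁

/-- The affine plane curve f = 0 has an ordinary cusp (locally y² = x³) at the origin:
its quadratic part is the square l² of a nonzero linear form (a double tangent line), and
l does not divide the cubic part. -/
def CuspAtOrigin (k : Type*) [CommRing k] (f : MvPolynomial (Fin 2) k) : Prop :=
  ∃ l : MvPolynomial (Fin 2) k, l.IsHomogeneous 1 ∧ l ≠ 0 ∧
    MvPolynomial.homogeneousComponent 2 f = l ^ 2 ∧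
    ¬ l ∣ MvPolynomial.homogeneousComponent 3 f

/-- C (given by its function field K over k) can be represented as a plane quintic with
precisely one singularity, of delta invariant 1: there is an irreducible ternary quintic
form F over k whose only singular point is (0 : 0 : 1) (after a choice of coordinates),
which is a node or an ordinary cusp of the affine curve f(x, y) = F(x, y, 1) = 0, and
whose field of rational functions is K, i.e. K = k(x, y) for some x, y ∈ K with
f(x, y) = 0. -/
def HasPlaneQuinticModel (k K : Type*) [Field k] [Field K] [Algebra k K] : Prop :=
  ∃ F : MvPolynomial (Fin 3) k, F.IsHomogeneous 5 ∧ Irreducible F ∧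
    IsSingAt k F ![0, 0, 1] ∧
    (∀ p : Fin 3 → k, p ≠ 0 → IsSingAt k F p → ∃ c : k, p = c • ![0, 0, 1]) ∧
    (NodeAtOrigin k (dehomZ k F) ∨ CuspAtOrigin k (dehomZ k F)) ∧
    ∃ x y : K, IntermediateField.adjoin k ({x, y} : Set K) = ⊤ ∧
      MvPolynomial.aeval ![x, y] (dehomZ k F) = 0

/-!
A map `x` of degree three to `ℙ¹` has push-forward of the structure sheaf `𝒪 ⊕ 𝒪(-m) ⊕ 𝒪(-n)`,
obtained here as a basis `1, α, β` of the integral closure of `k[x]` whose pole orders over `x = ∞`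
are as small as possible.  Normalizing `α β ∈ k[x]`, associativity forces the Delone–Faddeev
multiplication table, so the curve is the zero locus `a θ ^ 3 - b θ ^ 2 + c θ - d = 0` on a rational
scroll, with `a, b, c, d` of degrees at most `2m - n, m, n, 2n - m`.  By adjunction the regular
differentials are `(p(x) + q(x) θ) dx / (3 a θ ^ 2 - 2 b θ + c)` with `deg p ≤ n - 2` and
`deg q ≤ m - 2`; genus five means `m + n = 7`, and `a ≠ 0` leaves only `(m, n) = (3, 4)`.  This
scroll is the plane blown up at a point, and in the plane the equation becomes the quintic
`A Z ^ 3 - B Z ^ 2 + C Z - D`.  Its tangent cone at `(0 : 0 : 1)` is `A`: two distinct lines give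
a node, and a double line gives a cusp because the curve on the scroll is smooth.

Conversely, projecting a quintic from a double point is a map of degree `5 - 2 = 3`: with a node or
a cusp at `(0 : 0 : 1)` the equation is cubic in `Z` with leading coefficient `A ≠ 0`, and it stays
irreducible over `k(X / Y)` by Gauss's lemma.
-/

namespace TrigonalCurve

section FunctionField

variable {k K : Type*} [Field k] [Field K] [Algebra k K]

section Places

/-- The `k`-subalgebra `A` of `K` is the valuation ring of a place of `K / k`.  The trivial
place `A = K` is allowed, as in `RegularDifferentials`. -/
class IsPlace (A : Subalgebra k K) : Prop where
  mem_or_inv_mem : ∀ z : K, z ∈ A ∨ z⁻¹ ∈ A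

lemma isPlace_iff {A : Subalgebra k K} : IsPlace A ↔ ∀ z : K, z ≠ 0 → z ∈ A ∨ z⁻¹ ∈ A := by
  refine ⟨fun h z _ => h.mem_or_inv_mem z, fun h => ⟨fun z => ?_⟩⟩
  rcases eq_or_ne z 0 with rfl | hz
  · exact Or.inl (zero_mem A)
  · exact h z hz

instance isPlace_top : IsPlace (⊤ : Subalgebra k K) := ⟨fun _ => Or.inl trivial⟩

instance (A : Subalgebra k K) [IsPlace A] : ValuationRing A where
  cond' a b := by
    rcases eq_or_ne (a : K) 0 with ha | ha
    · exact ⟨0, Or.inr (Subtype.ext (by simp [ha]))⟩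
    rcases eq_or_ne (b : K) 0 with hb | hb
    · exact ⟨0, Or.inl (Subtype.ext (by simp [hb]))⟩
    rcases IsPlace.mem_or_inv_mem (A := A) ((a : K) / b) with h | h
    · exact ⟨⟨_, h⟩, Or.inr (Subtype.ext (by simp [mul_div_cancel₀ _ hb]))⟩
    · exact ⟨⟨_, h⟩, Or.inl (Subtype.ext (by simp [inv_div, mul_div_cancel₀ _ ha]))⟩

/-- The function `z` is regular and zero at the place `A`: it lies in the maximal ideal. -/
def VanishesAt (A : Subalgebra k K) (z : K) : Prop := ∃ h : z ∈ A, (⟨z, h⟩ : A) ∈ nonunits A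

variable {A : Subalgebra k K} {z w : K}

lemma not_vanishesAt_iff (hz : z ∈ A) : ¬ VanishesAt A z ↔ z ≠ 0 ∧ z⁻¹ ∈ A := by
  simp only [VanishesAt, hz, exists_true_left, mem_nonunits_iff, not_not, isUnit_iff_exists_inv]
  constructor
  · rintro ⟨⟨w, hw⟩, h⟩
    have hzw : z * w = 1 := congrArg Subtype.val h
    exact ⟨left_ne_zero_of_mul_eq_one hzw, eq_inv_of_mul_eq_one_right hzw ▸ hw⟩
  · rintro ⟨hz0, hi⟩
    exact ⟨⟨_, hi⟩, Subtype.ext (mul_inv_cancel₀ hz0)⟩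

lemma ne_zero_of_not_vanishesAt (hz : z ∈ A) (h : ¬ VanishesAt A z) : z ≠ 0 :=
  ((not_vanishesAt_iff hz).1 h).1

lemma inv_mem_of_not_vanishesAt (hz : z ∈ A) (h : ¬ VanishesAt A z) : z⁻¹ ∈ A :=
  ((not_vanishesAt_iff hz).1 h).2

lemma vanishesAt_zero : VanishesAt A (0 : K) := by
  by_contra h
  exact ne_zero_of_not_vanishesAt (zero_mem A) h rfl

lemma VanishesAt.mem (hz : VanishesAt A z) : z ∈ A := hz.1

lemma VanishesAt.mul_left (hw : w ∈ A) (hz : VanishesAt A z) : VanishesAt A (w * z) :=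
  ⟨mul_mem hw hz.1, mul_mem_nonunits_right (a := ⟨w, hw⟩) hz.2⟩

lemma VanishesAt.mul_right (hz : VanishesAt A z) (hw : w ∈ A) : VanishesAt A (z * w) :=
  mul_comm w z ▸ hz.mul_left hw

lemma VanishesAt.neg (hz : VanishesAt A z) : VanishesAt A (-z) := by
  simpa using hz.mul_left (neg_mem (one_mem A))

lemma VanishesAt.add [IsPlace A] (hz : VanishesAt A z) (hw : VanishesAt A w) :
    VanishesAt A (z + w) :=
  ⟨add_mem hz.1 hw.1, IsLocalRing.nonunits_add hz.2 hw.2⟩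

lemma VanishesAt.sub [IsPlace A] (hz : VanishesAt A z) (hw : VanishesAt A w) :
    VanishesAt A (z - w) :=
  sub_eq_add_neg z w ▸ hz.add hw.neg

lemma VanishesAt.of_mul (hz : z ∈ A) (hw : w ∈ A) (h : VanishesAt A (z * w)) :
    VanishesAt A z ∨ VanishesAt A w := by
  have hzw := h.2
  by_contra! hcon
  simp only [VanishesAt, hz, hw, exists_true_left, mem_nonunits_iff, not_not] at hcon
  exact hzw (hcon.1.mul hcon.2)

lemma vanishesAt_inv_of_notMem [IsPlace A] (hz : z ∉ A) : VanishesAt A z⁻¹ := by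
  by_contra h
  exact hz (by simpa using inv_mem_of_not_vanishesAt ((IsPlace.mem_or_inv_mem z).resolve_left hz) h)

lemma not_vanishesAt_algebraMap {c : k} (hc : c ≠ 0) : ¬ VanishesAt A (algebraMap k K c) :=
  (not_vanishesAt_iff (A.algebraMap_mem c)).2
    ⟨by simpa using hc, by simpa using A.algebraMap_mem c⁻¹⟩

lemma aeval_mem {y : K} (hy : y ∈ A) (p : k[X]) : aeval y p ∈ A := by
  simpa [Polynomial.aeval_algHom_apply] using (aeval (⟨y, hy⟩ : A) p).2

/-- The function `u` is regular at the place `A`, with value `c ∈ k` there. -/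
def HasValueAt (A : Subalgebra k K) (u : K) (c : k) : Prop := VanishesAt A (u - algebraMap k K c)

variable {u v : K} {c e : k}

lemma HasValueAt.mem (h : HasValueAt A u c) : u ∈ A := by
  simpa using add_mem h.1 (A.algebraMap_mem c)

lemma hasValueAt_algebraMap (c : k) : HasValueAt A (algebraMap k K c) c := by
  simpa [HasValueAt] using vanishesAt_zero

lemma HasValueAt.add [IsPlace A] (h : HasValueAt A u c) (h' : HasValueAt A v e) :
    HasValueAt A (u + v) (c + e) := by
  simpa [HasValueAt, add_sub_add_comm] using VanishesAt.add h h'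

lemma HasValueAt.sub [IsPlace A] (h : HasValueAt A u c) (h' : HasValueAt A v e) :
    HasValueAt A (u - v) (c - e) := by
  simpa [HasValueAt, sub_sub_sub_comm] using VanishesAt.sub h h'

lemma HasValueAt.mul [IsPlace A] (h : HasValueAt A u c) (h' : HasValueAt A v e) :
    HasValueAt A (u * v) (c * e) := by
  have heq : u * v - algebraMap k K (c * e) =
      (u - algebraMap k K c) * v + algebraMap k K c * (v - algebraMap k K e) := by
    rw [map_mul]; ring
  rw [HasValueAt, heq]
  exact (VanishesAt.mul_right h h'.mem).add (VanishesAt.mul_left (A.algebraMap_mem c) h')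

lemma HasValueAt.aeval (h : HasValueAt A u c) (p : k[X]) :
    HasValueAt A (aeval u p) (p.eval c) := by
  obtain ⟨q, hq⟩ := X_sub_C_dvd_sub_C_eval (p := p) (a := c)
  have hu := congrArg (Polynomial.aeval u) hq
  simp only [map_sub, aeval_C, map_mul, aeval_X] at hu
  rw [HasValueAt, hu]
  exact VanishesAt.mul_right h (aeval_mem h.mem q)

lemma HasValueAt.pow (h : HasValueAt A u c) (n : ℕ) : HasValueAt A (u ^ n) (c ^ n) := by
  simpa using h.aeval (X ^ n)

lemma HasValueAt.vanishesAt_iff [IsPlace A] (h : HasValueAt A u c) :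
    VanishesAt A u ↔ c = 0 := by
  refine ⟨fun hu => ?_, fun hc => by simpa [HasValueAt, hc] using h⟩
  by_contra hc
  exact not_vanishesAt_algebraMap hc (by simpa using hu.sub h)

lemma exists_hasValueAt_of_vanishesAt_aeval [IsAlgClosed k] (hu : u ∈ A) {p : k[X]} (hp : p ≠ 0)
    (h : VanishesAt A (aeval u p)) : ∃ c : k, HasValueAt A u c := by
  induction hn : p.natDegree generalizing p with
  | zero =>
    rw [eq_C_of_natDegree_eq_zero hn] at h hp
    rw [aeval_C] at h
    exact absurd h (not_vanishesAt_algebraMap (by simpa using hp))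
  | succ n ih =>
    obtain ⟨c, hc⟩ := IsAlgClosed.exists_root p (fun h0 => by
      rw [natDegree_eq_of_degree_eq_some (n := 0) h0] at hn; omega)
    obtain ⟨q, rfl⟩ := dvd_iff_isRoot.mpr hc
    have hq : q ≠ 0 := right_ne_zero_of_mul hp
    rw [natDegree_mul (X_sub_C_ne_zero c) hq, natDegree_X_sub_C] at hn
    rw [map_mul] at h
    rcases h.of_mul (aeval_mem hu _) (aeval_mem hu _) with h | h
    · exact ⟨c, by simpa [HasValueAt] using h⟩
    · exact ih hq h (by omega)

end Places

section AffineRing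

/-- The integral closure of `k[x]` in `K`: the functions whose poles lie over `x = ∞`. -/
def affineRing (k : Type*) {K : Type*} [Field k] [Field K] [Algebra k K] (x : K) :
    Subalgebra k K :=
  (integralClosure (Algebra.adjoin k {x}) K).restrictScalars k

lemma mem_affineRing_iff_isIntegral {x y : K} :
    y ∈ affineRing k x ↔ IsIntegral (Algebra.adjoin k {x}) y := Iff.rfl

lemma isIntegral_adjoin_iff_forall_mem {s : Set K} {y : K} :
    IsIntegral (Algebra.adjoin k s) y ↔ ∀ A : Subalgebra k K, IsPlace A → s ⊆ A → y ∈ A := by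
  have hint : IsIntegral (Algebra.adjoin k s) y ↔
      IsIntegral (Subring.closure (Set.range (algebraMap k K) ∪ s)) y := by
    rw [← Algebra.adjoin_eq_ring_closure]
    rfl
  have hmem : IsIntegral (Subring.closure (Set.range (algebraMap k K) ∪ s)) y ↔
      y ∈ ⨅ V : {V : ValuationSubring K //
        (Set.range (algebraMap k K) ∪ s) ⊆ V.toSubring}, V.1.toSubring := by
    rw [iInf_valuationSubring_superset]
    rfl
  rw [hint, hmem, Subring.mem_iInf]
  refine ⟨fun h A hA hs => ?_, ?_⟩
  · let V : ValuationSubring K :=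
      { A.toSubring with mem_or_inv_mem' := fun z => hA.mem_or_inv_mem z }
    refine h ⟨V, Set.union_subset ?_ hs⟩
    rintro _ ⟨c, rfl⟩
    exact A.algebraMap_mem c
  · rintro h ⟨V, hV⟩
    let A : Subalgebra k K :=
      { V.toSubring with algebraMap_mem' := fun c => hV (Or.inl ⟨c, rfl⟩) }
    exact h A ⟨V.mem_or_inv_mem⟩ fun z hz => hV (Or.inr hz)

variable {x y : K}

lemma mem_affineRing_iff :
    y ∈ affineRing k x ↔ ∀ A : Subalgebra k K, IsPlace A → x ∈ A → y ∈ A := by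
  simp [mem_affineRing_iff_isIntegral, isIntegral_adjoin_iff_forall_mem]

lemma self_mem_affineRing (x : K) : x ∈ affineRing k x :=
  mem_affineRing_iff.2 fun _ _ h => h

lemma aeval_mem_affineRing (x : K) (p : k[X]) : aeval x p ∈ affineRing k x :=
  aeval_mem (self_mem_affineRing x) p

lemma mem_affineRing_of_mul_self_eq {z u v : K} (hu : u ∈ affineRing k x)
    (hv : v ∈ affineRing k x) (h : z * z = u + v * z) : z ∈ affineRing k x := by
  refine mem_affineRing_iff.2 fun A hA hx => ?_
  have mem_A {w : K} (hw : w ∈ affineRing k x) : w ∈ A := mem_affineRing_iff.1 hw A hA hx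
  by_contra hz
  have hzi := (hA.mem_or_inv_mem z).resolve_left hz
  have hz0 : z ≠ 0 := fun h0 => hz (h0 ▸ zero_mem A)
  refine hz ?_
  have heq : z = u * z⁻¹ + v := by
    field_simp
    linear_combination h
  exact heq ▸ add_mem (mul_mem (mem_A hu) hzi) (mem_A hv)

lemma exists_algebraMap_eq_of_mem_affineRing_inv [IsAlgClosed k] (hy : y ∈ affineRing k x)
    (hy' : y ∈ affineRing k x⁻¹) : ∃ c : k, algebraMap k K c = y := by
  have hyk : IsIntegral (Algebra.adjoin k (∅ : Set K)) y := by
    refine isIntegral_adjoin_iff_forall_mem.2 fun A hA _ => ?_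
    rcases hA.mem_or_inv_mem x with hx | hx
    · exact mem_affineRing_iff.1 hy A hA hx
    · exact mem_affineRing_iff.1 hy' A hA hx
  have hint : IsIntegral k y := by
    rw [Algebra.adjoin_empty] at hyk
    exact isIntegral_trans (R := k) (A := (⊥ : Subalgebra k K)) y hyk
  exact minpoly.mem_range_of_degree_eq_one k y
    (IsAlgClosed.degree_eq_one_of_irreducible k (minpoly.irreducible hint))

end AffineRing

end FunctionField

section ReducedFamilies

variable {k K : Type*} [Field k] [Field K] [Algebra k K] {x : K}

section RationalSubfield

lemma ne_zero_of_transcendental (hx : Transcendental k x) : x ≠ 0 :=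
  fun h => hx (h ▸ isAlgebraic_zero)

lemma adjoin_simple_inv (x : K) : k⟮x⁻¹⟯ = k⟮x⟯ := by
  refine le_antisymm (adjoin_simple_le_iff.2 (inv_mem (mem_adjoin_simple_self k x)))
    (adjoin_simple_le_iff.2 ?_)
  simpa using inv_mem (mem_adjoin_simple_self k x⁻¹)

open scoped algebraAdjoinAdjoin in
lemma exists_aeval_mul_mem_affineRing (x : K) [Algebra.IsAlgebraic k⟮x⟯ K] (z : K) :
    ∃ D : k[X], aeval x D ≠ 0 ∧ aeval x D * z ∈ affineRing k x := by
  have hz : IsAlgebraic (Algebra.adjoin k {x}) z :=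
    (IsFractionRing.isAlgebraic_iff _ k⟮x⟯ K).2 (Algebra.IsAlgebraic.isAlgebraic z)
  obtain ⟨r, hr, hint⟩ := hz.exists_integral_multiple
  obtain ⟨D, hD⟩ := Algebra.adjoin_mem_exists_aeval k x r.2
  exact ⟨D, hD ▸ Subtype.coe_ne_coe.2 hr, hD ▸ hint⟩

lemma exists_mul_inv_pow_mem_affineRing_inv [Algebra.IsAlgebraic k⟮x⟯ K] {y : K}
    (hy : y ∈ affineRing k x) : ∃ n : ℕ, y * x⁻¹ ^ n ∈ affineRing k x⁻¹ := by
  have : Algebra.IsAlgebraic k⟮x⁻¹⟯ K := by rw [adjoin_simple_inv]; infer_instance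
  obtain ⟨D, hD0, hD⟩ := exists_aeval_mul_mem_affineRing (k := k) x⁻¹ y
  obtain ⟨D₁, hDD₁, hD₁⟩ := exists_eq_pow_rootMultiplicity_mul_and_not_dvd D
    (ne_zero_of_map hD0) 0
  rw [dvd_iff_isRoot, IsRoot.def] at hD₁
  refine ⟨rootMultiplicity 0 D, mem_affineRing_iff.2 fun A hA hxA => ?_⟩
  by_cases hx : x ∈ A
  · exact mul_mem (mem_affineRing_iff.1 hy A hA hx) (pow_mem hxA _)
  have hx0 : HasValueAt A x⁻¹ 0 := by simpa [HasValueAt] using vanishesAt_inv_of_notMem hx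
  have hunit := mt (hx0.aeval D₁).vanishesAt_iff.1 hD₁
  have hmem := mul_mem (inv_mem_of_not_vanishesAt (aeval_mem hxA D₁) hunit)
    (mem_affineRing_iff.1 hD A hA hxA)
  have hne := ne_zero_of_not_vanishesAt (aeval_mem hxA D₁) hunit
  have hfactor : aeval x⁻¹ D = x⁻¹ ^ rootMultiplicity 0 D * aeval x⁻¹ D₁ := by
    simpa only [C_0, sub_zero, map_mul, map_pow, aeval_X] using congrArg (aeval x⁻¹) hDD₁
  rw [hfactor] at hmem
  generalize aeval x⁻¹ D₁ = d at hmem hne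
  convert hmem using 1
  field_simp

open scoped algebraAdjoinAdjoin in
lemma linearIndependent_adjoin_simple_iff {ι : Type*} [Fintype ι] (hx : Transcendental k x)
    {ω : ι → K} :
    LinearIndependent k⟮x⟯ ω ↔ ∀ p : ι → k[X], ∑ i, aeval x (p i) * ω i = 0 → p = 0 := by
  have hx' := transcendental_iff.1 hx
  rw [← LinearIndependent.iff_fractionRing (Algebra.adjoin k {x}) k⟮x⟯,
    Fintype.linearIndependent_iff]
  constructor
  · intro h p hp
    funext i
    refine hx' _ (congrArg Subtype.val (h (fun i => ⟨aeval x (p i), aeval_mem_adjoin_singleton k x⟩)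
      ?_ i))
    simpa [Algebra.smul_def] using hp
  · intro h g hg i
    choose p hp using fun i => Algebra.adjoin_mem_exists_aeval k x (g i).2
    have := h p (by simpa [Algebra.smul_def, hp] using hg)
    exact Subtype.ext (by simp [← hp, this])

lemma pow_mul_inv_pow_self (hx : x ≠ 0) (i : ℕ) : x ^ i * x⁻¹ ^ i = 1 := by
  rw [← mul_pow, mul_inv_cancel₀ hx, one_pow]

lemma pow_sub_mul_inv_pow (hx : x ≠ 0) {i j : ℕ} (h : i ≤ j) :
    x ^ (j - i) * x⁻¹ ^ j = x⁻¹ ^ i := by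
  nth_rewrite 2 [← Nat.sub_add_cancel h]
  rw [pow_add, ← mul_assoc, pow_mul_inv_pow_self hx, one_mul]

lemma aeval_inv_reflect (hx : x ≠ 0) {p : k[X]} {N : ℕ} (hp : p.natDegree ≤ N) :
    aeval x⁻¹ (reflect N p) = aeval x p * x⁻¹ ^ N := by
  let _ := invertibleOfNonzero hx
  have h := eval₂_reflect_mul_pow (algebraMap k K) x N p hp
  rw [invOf_eq_inv] at h
  rw [aeval_def, aeval_def, ← h, mul_assoc, pow_mul_inv_pow_self hx, mul_one]

lemma aeval_mul_inv_pow (hx : x ≠ 0) {p : k[X]} {N : ℕ} (hp : p.natDegree ≤ N) :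
    aeval x p * x⁻¹ ^ N =
      algebraMap k K (p.coeff N) + x⁻¹ * aeval x⁻¹ (divX (reflect N p)) := by
  rw [← aeval_inv_reflect hx hp]
  nth_rewrite 1 [← X_mul_divX_add (reflect N p)]
  simp [coeff_reflect, revAt_le (Nat.zero_le N), add_comm]

end RationalSubfield

section ReducedBasis

variable {ι : Type*} [Fintype ι]

/-- The family `ω` is linearly independent over `k(x)`, and `ω i` is regular away from
`x = ∞`, where its pole is bounded by that of `x ^ e i`. -/
structure IsGradedFamily (k : Type*) {K : Type*} [Field k] [Field K] [Algebra k K] (x : K)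
    (ω : ι → K) (e : ι → ℕ) : Prop where
  linearIndependent : LinearIndependent k⟮x⟯ ω
  mem i : ω i ∈ affineRing k x
  mul_inv_pow_mem i : ω i * x⁻¹ ^ e i ∈ affineRing k x⁻¹

/-- A graded family whose total degree is as small as possible.  When `ω` has
`[K : k(x)]` members, this is a splitting of the pushforward of the structure sheaf to
the projective line, with summands of degrees `-e i`. -/
structure IsReducedFamily (k : Type*) {K : Type*} [Field k] [Field K] [Algebra k K] (x : K)
    (ω : ι → K) (e : ι → ℕ) : Prop extends IsGradedFamily k x ω e where
  sum_le {ω' : ι → K} {e' : ι → ℕ} : IsGradedFamily k x ω' e' → ∑ i, e i ≤ ∑ i, e' i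

lemma exists_isReducedFamily (hx : Transcendental k x) [Algebra.IsAlgebraic k⟮x⟯ K]
    {ω₀ : ι → K} (hω₀ : LinearIndependent k⟮x⟯ ω₀) :
    ∃ (ω : ι → K) (e : ι → ℕ), IsReducedFamily k x ω e := by
  classical
  have hex : ∃ (N : ℕ) (ω : ι → K) (e : ι → ℕ), IsGradedFamily k x ω e ∧ ∑ i, e i = N := by
    choose D hD0 hD using fun i => exists_aeval_mul_mem_affineRing (k := k) x (ω₀ i)
    choose e he using fun i => exists_mul_inv_pow_mem_affineRing_inv (hD i)
    refine ⟨_, _, e, ⟨(linearIndependent_adjoin_simple_iff hx).2 fun p hp => ?_, hD, he⟩, rfl⟩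
    have hpD := (linearIndependent_adjoin_simple_iff hx).1 hω₀ (fun i => p i * D i)
      (by simpa [mul_assoc] using hp)
    exact funext fun i =>
      (mul_eq_zero.1 (congrFun hpD i)).resolve_right (ne_zero_of_map (hD0 i))
  obtain ⟨ω, e, h, he⟩ := Nat.find_spec hex
  exact ⟨ω, e, h, fun h' => he ▸ Nat.find_min' hex ⟨_, _, h', rfl⟩⟩

lemma eq_zero_of_mul_self_mem_affineRing_inv [IsAlgClosed k] (hx : Transcendental k x) {w : K}
    (hw : w ∈ affineRing k x) (hwx : w * x ∈ affineRing k x⁻¹) : w = 0 := by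
  have hx0 : x ≠ 0 := ne_zero_of_transcendental hx
  obtain ⟨c, rfl⟩ := exists_algebraMap_eq_of_mem_affineRing_inv hw (by
    simpa [hx0] using mul_mem hwx (self_mem_affineRing x⁻¹))
  obtain ⟨b, hb⟩ := exists_algebraMap_eq_of_mem_affineRing_inv
    (mul_mem hw (self_mem_affineRing x)) hwx
  have hcb : C c * X - C b = 0 := transcendental_iff.1 hx _ (by simp [hb])
  have hc : c = 0 := by simpa using congrArg (coeff · 1) hcb
  simp [hc]

variable {ω : ι → K} {e : ι → ℕ}

-- Otherwise `w` could replace `ω i` and would lower the total degree.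
lemma IsReducedFamily.coeff_eq_zero [IsAlgClosed k] (h : IsReducedFamily k x ω e)
    (hx : Transcendental k x) {i : ι} {w : K} (hw : w ∈ affineRing k x)
    (hwx : w * x⁻¹ ^ e i * x ∈ affineRing k x⁻¹) {D : k[X]} (hD : D ≠ 0) {p : ι → k[X]}
    (hp : aeval x D * w = ∑ l, aeval x (p l) * ω l) : p i = 0 := by
  classical
  have hindep := (linearIndependent_adjoin_simple_iff hx).1 h.linearIndependent
  rcases hei : e i with _ | n
  · have hw0 := eq_zero_of_mul_self_mem_affineRing_inv hx hw (by simpa [hei] using hwx)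
    exact congrFun (hindep p (by rw [← hp, hw0, mul_zero])) i
  by_contra hpi
  have hwn : w * x⁻¹ ^ n ∈ affineRing k x⁻¹ := by
    have hx0 : x ≠ 0 := ne_zero_of_transcendental hx
    simpa [hei, pow_succ, mul_assoc, hx0] using hwx
  have hindep' : LinearIndependent k⟮x⟯ (Function.update ω i w) := by
    refine (linearIndependent_adjoin_simple_iff hx).2 fun q hq => ?_
    have hsum : ∑ l, aeval x (q i * p l + D * (if l = i then 0 else q l)) * ω l = 0 := by
      have hterm l : aeval x (if l = i then 0 else q l) * ω l =
          aeval x (q l) * Function.update ω i w l - if l = i then aeval x (q i) * w else 0 := by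
        by_cases hl : l = i <;> simp [hl]
      simp only [map_add, map_mul, add_mul, mul_assoc, hterm, Finset.sum_add_distrib,
        ← Finset.mul_sum, ← hp, Finset.sum_sub_distrib, hq, Finset.sum_ite_eq',
        Finset.mem_univ, if_true]
      ring
    have hzero := fun l => congrFun (hindep _ hsum) l
    have hqi : q i = 0 := by simpa [hpi] using hzero i
    funext l
    by_cases hl : l = i
    · exact hl ▸ hqi
    · simpa [hqi, hl, hD] using hzero l
  have hgraded : IsGradedFamily k x (Function.update ω i w) (Function.update e i n) :=
    ⟨hindep', Function.forall_update_iff ω (fun _ z => z ∈ affineRing k x) |>.2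
      ⟨hw, fun l _ => h.mem l⟩, fun l => by
        rcases eq_or_ne l i with rfl | hl
        · simpa only [Function.update_self] using hwn
        · simpa only [Function.update_of_ne hl] using h.mul_inv_pow_mem l⟩
  have hle := h.sum_le hgraded
  rw [Finset.sum_update_of_mem (Finset.mem_univ i),
    ← Finset.add_sum_erase _ e (Finset.mem_univ i), Finset.sdiff_singleton_eq_erase] at hle
  omega

lemma mul_inv_pow_mul_self_mem_of_sub_mul {w : K} {a : k} {n : ℕ} (hw : w ∈ affineRing k x)
    (h : (x - algebraMap k K a) * w * x⁻¹ ^ n ∈ affineRing k x⁻¹) :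
    w * x⁻¹ ^ n * x ∈ affineRing k x⁻¹ := by
  refine mem_affineRing_iff.2 fun A hA hxA => ?_
  by_cases hx : x ∈ A
  · exact mul_mem (mul_mem (mem_affineRing_iff.1 hw A hA hx) (pow_mem hxA n)) hx
  have hx0 : x ≠ 0 := fun h0 => hx (h0 ▸ zero_mem A)
  have hunit : HasValueAt A (1 - algebraMap k K a * x⁻¹) 1 := by
    have hxi : HasValueAt A x⁻¹ 0 := by simpa [HasValueAt] using vanishesAt_inv_of_notMem hx
    simpa using (hasValueAt_algebraMap 1).sub ((hasValueAt_algebraMap a).mul hxi)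
  have hne := mt hunit.vanishesAt_iff.1 one_ne_zero
  convert mul_mem (inv_mem_of_not_vanishesAt hunit.mem hne) (mem_affineRing_iff.1 h A hA hxA)
    using 1
  rw [eq_inv_mul_iff_mul_eq₀ (ne_zero_of_not_vanishesAt hunit.mem hne)]
  field_simp

lemma IsReducedFamily.eq_zero_of_sum_eq_sub_mul [IsAlgClosed k] (h : IsReducedFamily k x ω e)
    (hx : Transcendental k x) {c : ι → k} {a : k} {w : K} (hw : w ∈ affineRing k x)
    (hc : ∑ l, algebraMap k K (c l) * ω l = (x - algebraMap k K a) * w) : c = 0 := by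
  classical
  by_contra hc0
  obtain ⟨i, hi, hmax⟩ := Finset.exists_max_image {l | c l ≠ 0} e
    ((Function.ne_iff.1 hc0).imp fun l hl => by simpa using hl)
  simp only [Finset.mem_filter_univ] at hi hmax
  have hwx : w * x⁻¹ ^ e i * x ∈ affineRing k x⁻¹ := by
    refine mul_inv_pow_mul_self_mem_of_sub_mul (a := a) hw (hc ▸ ?_)
    rw [Finset.sum_mul]
    refine sum_mem fun l _ => ?_
    rcases eq_or_ne (c l) 0 with hl | hl
    · simp [hl]
    · rw [← Nat.add_sub_cancel' (hmax l hl), pow_add, mul_assoc, ← mul_assoc (ω l)]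
      exact mul_mem (algebraMap_mem _ _) (mul_mem (h.mul_inv_pow_mem l)
        (pow_mem (self_mem_affineRing _) _))
  have hci := h.coeff_eq_zero hx hw hwx (X_sub_C_ne_zero a) (p := fun l => C (c l))
    (by simpa using hc.symm)
  exact hi (by simpa using hci)

lemma IsReducedFamily.eq_zero_of_sum_eq_inv_mul [IsAlgClosed k] (h : IsReducedFamily k x ω e)
    (hx : Transcendental k x) {c : ι → k} {u : K} (hu : u ∈ affineRing k x⁻¹)
    (hc : ∑ l, algebraMap k K (c l) * (ω l * x⁻¹ ^ e l) = x⁻¹ * u) : c = 0 := by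
  classical
  have hx0 := ne_zero_of_transcendental hx
  by_contra hc0
  obtain ⟨i, hi, hmax⟩ := Finset.exists_max_image {l | c l ≠ 0} e
    ((Function.ne_iff.1 hc0).imp fun l hl => by simpa using hl)
  simp only [Finset.mem_filter_univ] at hi hmax
  let p : ι → k[X] := fun l => C (c l) * X ^ (e i - e l)
  have hp l : aeval x (p l) * ω l * x⁻¹ ^ e i = algebraMap k K (c l) * (ω l * x⁻¹ ^ e l) := by
    rcases eq_or_ne (c l) 0 with hl | hl
    · simp [p, hl]
    · rw [← pow_sub_mul_inv_pow hx0 (hmax l hl)]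
      simp only [p, map_mul, aeval_C, map_pow, aeval_X]
      ring
  have hwx : (∑ l, aeval x (p l) * ω l) * x⁻¹ ^ e i * x = u := by
    rw [Finset.sum_mul, Finset.sum_congr rfl fun l _ => hp l, hc]
    field_simp
  have hpi := h.coeff_eq_zero hx (p := p) (D := 1) (i := i)
    (sum_mem fun l _ => mul_mem (aeval_mem_affineRing x _) (h.mem l)) (hwx ▸ hu) one_ne_zero
    (by simp)
  exact hi (by simpa [p] using hpi)

lemma IsReducedFamily.exists_eq_sum_of_mul_eq_sum [IsAlgClosed k] (h : IsReducedFamily k x ω e)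
    (hx : Transcendental k x) {y : K} (hy : y ∈ affineRing k x) {D : k[X]} (hD : D ≠ 0)
    {p : ι → k[X]} (hp : aeval x D * y = ∑ l, aeval x (p l) * ω l) :
    ∃ q : ι → k[X], y = ∑ l, aeval x (q l) * ω l := by
  induction hn : D.natDegree generalizing D p with
  | zero =>
    rw [eq_C_of_natDegree_eq_zero hn] at hp hD
    refine ⟨fun l => C (D.coeff 0)⁻¹ * p l, ?_⟩
    simp only [map_mul, aeval_C, mul_assoc, ← Finset.mul_sum, ← hp]
    rw [← mul_assoc, ← map_mul, inv_mul_cancel₀ (by simpa using hD), map_one, one_mul]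
  | succ n ih =>
    obtain ⟨a, ha⟩ := IsAlgClosed.exists_root D fun h0 => by
      rw [natDegree_eq_of_degree_eq_some (n := 0) h0] at hn; omega
    obtain ⟨D, rfl⟩ := dvd_iff_isRoot.2 ha
    have hD0 : D ≠ 0 := right_ne_zero_of_mul hD
    rw [natDegree_mul (X_sub_C_ne_zero a) hD0, natDegree_X_sub_C] at hn
    have hpa : (fun l => (p l).eval a) = 0 := by
      choose r hr using fun l => X_sub_C_dvd_sub_C_eval (p := p l) (a := a)
      refine h.eq_zero_of_sum_eq_sub_mul hx (a := a)
        (w := aeval x D * y - ∑ l, aeval x (r l) * ω l)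
        (sub_mem (mul_mem (aeval_mem_affineRing x D) hy)
          (sum_mem fun l _ => mul_mem (aeval_mem_affineRing x _) (h.mem l))) ?_
      have hr' l : aeval x (p l) - algebraMap k K ((p l).eval a) =
          (x - algebraMap k K a) * aeval x (r l) := by simpa using congrArg (aeval x) (hr l)
      simp only [map_mul, map_sub, aeval_X, aeval_C] at hp
      rw [mul_sub, ← mul_assoc, hp, Finset.mul_sum, ← Finset.sum_sub_distrib]
      exact Finset.sum_congr rfl fun l _ => by rw [← mul_assoc, ← hr']; ring
    choose r hr using fun l => dvd_iff_isRoot.2 (congrFun hpa l)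
    have hxa : x - algebraMap k K a ≠ 0 :=
      sub_ne_zero.2 fun h0 => hx (h0 ▸ isAlgebraic_algebraMap a)
    refine ih hD0 (p := r) (mul_left_cancel₀ hxa ?_) (by omega)
    simpa [hr, mul_assoc, Finset.mul_sum] using hp

lemma IsReducedFamily.exists_eq_sum [IsAlgClosed k] [FiniteDimensional k⟮x⟯ K]
    (h : IsReducedFamily k x ω e) (hx : Transcendental k x)
    (hcard : Fintype.card ι = Module.finrank k⟮x⟯ K) {y : K} (hy : y ∈ affineRing k x) :
    ∃ q : ι → k[X], y = ∑ l, aeval x (q l) * ω l := by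
  have hdep : ¬ LinearIndependent k⟮x⟯ (fun o : Option ι => o.elim y ω) := fun hli => by
    have := hli.fintype_card_le_finrank
    rw [Fintype.card_option] at this
    omega
  rw [linearIndependent_adjoin_simple_iff hx] at hdep
  push Not at hdep
  obtain ⟨p, hp, hp0⟩ := hdep
  simp only [Fintype.sum_option, Option.elim_none, Option.elim_some] at hp
  refine h.exists_eq_sum_of_mul_eq_sum hx hy (D := p none) (p := fun l => -p (some l))
    (fun hnone => hp0 ?_) ?_
  · have hsome := (linearIndependent_adjoin_simple_iff hx).1 h.linearIndependent
      (fun l => p (some l)) (by simpa [hnone] using hp)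
    funext o
    cases o with
    | none => exact hnone
    | some l => exact congrFun hsome l
  · simpa [Finset.sum_neg_distrib] using eq_neg_of_add_eq_zero_left hp

lemma IsReducedFamily.eq_zero_or_natDegree_add_le [IsAlgClosed k] (h : IsReducedFamily k x ω e)
    (hx : Transcendental k x) {q : ι → k[X]} {j : ℕ}
    (hj : (∑ l, aeval x (q l) * ω l) * x⁻¹ ^ j ∈ affineRing k x⁻¹) (l : ι) :
    q l = 0 ∨ (q l).natDegree + e l ≤ j := by
  classical
  have hx0 := ne_zero_of_transcendental hx
  by_contra! hl
  obtain ⟨i, hi, hmax⟩ := Finset.exists_max_image {l | q l ≠ 0}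
    (fun l => (q l).natDegree + e l) ⟨l, by simpa using hl.1⟩
  simp only [Finset.mem_filter_univ] at hi hmax
  have hjN := hl.2.trans_le (hmax l hl.1)
  generalize hN : (q i).natDegree + e i = N at hmax hjN
  have hlead : (fun l => (q l).coeff (N - e l)) = 0 := by
    let v l := aeval x⁻¹ (divX (reflect (N - e l) (q l)))
    refine h.eq_zero_of_sum_eq_inv_mul hx
      (u := (∑ l, aeval x (q l) * ω l) * x⁻¹ ^ j * x⁻¹ ^ (N - j - 1) -
        ∑ l, v l * (ω l * x⁻¹ ^ e l)) ?_ ?_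
    · exact sub_mem (mul_mem hj (pow_mem (self_mem_affineRing _) _))
        (sum_mem fun l _ => mul_mem (aeval_mem_affineRing _ _) (h.mul_inv_pow_mem l))
    · have hpow : x⁻¹ ^ j * x⁻¹ ^ (N - j - 1) * x⁻¹ = x⁻¹ ^ N := by
        rw [← pow_add, ← pow_succ]; congr 1; omega
      have hterm l : algebraMap k K ((q l).coeff (N - e l)) * (ω l * x⁻¹ ^ e l) =
          aeval x (q l) * ω l * x⁻¹ ^ N - x⁻¹ * (v l * (ω l * x⁻¹ ^ e l)) := by
        rcases eq_or_ne (q l) 0 with h0 | h0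
        · simp [v, h0]
        have hle := hmax l h0
        have hsplit := aeval_mul_inv_pow hx0 (p := q l) (N := N - e l) (by omega)
        rw [← Nat.sub_add_cancel (show e l ≤ N by omega), pow_add,
          Nat.add_sub_cancel, eq_sub_of_add_eq hsplit.symm]
        ring
      rw [Finset.sum_congr rfl fun l _ => hterm l, Finset.sum_sub_distrib, ← Finset.sum_mul,
        ← Finset.mul_sum, ← hpow]
      ring
  have hzero := congrFun hlead i
  rw [← hN, Nat.add_sub_cancel] at hzero
  exact hi (leadingCoeff_eq_zero.1 hzero)

end ReducedBasis

end ReducedFamilies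

section TrigonalMaps

variable {k K : Type*} [Field k] [Field K] [Algebra k K] {x : K}

section LocalFractions

variable {ι : Type*} [Fintype ι] {y : ι → K} {A : Subalgebra k K}

lemma exists_relation_eval_ne_zero (hx : Transcendental k x) (c : k) {p : ι → k[X]} (hp : p ≠ 0)
    (hsum : ∑ i, aeval x (p i) * y i = 0) :
    ∃ q : ι → k[X], (∃ i, (q i).eval c ≠ 0) ∧ ∑ i, aeval x (q i) * y i = 0 := by
  classical
  obtain ⟨i, hi, hmin⟩ := Finset.exists_min_image {i | p i ≠ 0} (fun i => rootMultiplicity c (p i))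
    ((Function.ne_iff.1 hp).imp fun i hi => by simpa using hi)
  simp only [Finset.mem_filter_univ] at hi hmin
  have hdvd l : (X - C c) ^ rootMultiplicity c (p i) ∣ p l := by
    rcases eq_or_ne (p l) 0 with hl | hl
    · simp [hl]
    · exact (pow_dvd_pow _ (hmin l hl)).trans (pow_rootMultiplicity_dvd _ _)
  choose q hq using hdvd
  refine ⟨q, ⟨i, fun hroot => ?_⟩, ?_⟩
  · obtain ⟨r, hr⟩ := dvd_iff_isRoot.2 hroot
    have hdvd_succ : (X - C c) ^ (rootMultiplicity c (p i) + 1) ∣ p i :=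
      ⟨r, (hq i).trans (by rw [hr]; ring)⟩
    exact (Nat.lt_irrefl _ ((le_rootMultiplicity_iff hi).2 hdvd_succ))
  · have hne : aeval x ((X - C c) ^ rootMultiplicity c (p i)) ≠ 0 := fun h0 =>
      pow_ne_zero _ (X_sub_C_ne_zero c) (transcendental_iff.1 hx _ h0)
    refine (mul_eq_zero.1 (Eq.trans ?_ hsum)).resolve_left hne
    rw [Finset.mul_sum]
    exact Finset.sum_congr rfl fun l _ => by rw [← mul_assoc, ← map_mul, ← hq l]

lemma exists_relation_not_vanishesAt [IsAlgClosed k] [IsPlace A] (hx : Transcendental k x)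
    (hxA : x ∈ A) {p : ι → k[X]} (hp : p ≠ 0) (hsum : ∑ i, aeval x (p i) * y i = 0) :
    ∃ q : ι → k[X], (∃ i, ¬ VanishesAt A (aeval x (q i))) ∧ ∑ i, aeval x (q i) * y i = 0 := by
  by_cases hc : ∃ c, HasValueAt A x c
  · obtain ⟨c, hc⟩ := hc
    obtain ⟨q, ⟨i, hi⟩, hq⟩ := exists_relation_eval_ne_zero hx c hp hsum
    exact ⟨q, ⟨i, mt (hc.aeval (q i)).vanishesAt_iff.1 hi⟩, hq⟩
  · obtain ⟨i, hi⟩ := Function.ne_iff.1 hp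
    exact ⟨p, ⟨i, mt (exists_hasValueAt_of_vanishesAt_aeval hxA hi) hc⟩, hsum⟩

instance : IsIntegrallyClosedIn (affineRing k x) K :=
  inferInstanceAs (IsIntegrallyClosedIn (integralClosure (Algebra.adjoin k {x}) K) K)

-- As long as the leading coefficient `a` vanishes at `A`, the leading term `a z ^ d` can be
-- absorbed into the next one, because `a z` is integral.
lemma exists_mul_mem_of_aeval_eq_zero {R : Subalgebra k K} [IsIntegrallyClosedIn R K] [IsPlace A]
    {z : K} (hz : z ∈ A) {P : R[X]} (hP : aeval z P = 0) {i : ℕ}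
    (hi : ¬ VanishesAt A (P.coeff i : K)) : ∃ e ∈ R, ¬ VanishesAt A e ∧ e * z ∈ R := by
  induction hn : P.natDegree using Nat.strong_induction_on generalizing P i with
  | _ n ih =>
    obtain ⟨b, hb⟩ := IsIntegrallyClosedIn.algebraMap_eq_of_integral
      (isIntegral_leadingCoeff_smul P z hP)
    replace hb : (b : K) = P.leadingCoeff * z := hb
    by_cases hlead : VanishesAt A (P.leadingCoeff : K)
    swap
    · exact ⟨_, P.leadingCoeff.2, hlead, hb ▸ b.2⟩
    have hin : i ≠ n := by
      rintro rfl
      exact hi (by rwa [leadingCoeff, hn] at hlead)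
    have hi_lt : i < n := lt_of_le_of_ne (hn ▸ le_natDegree_of_ne_zero fun h0 => hi <| by
      simpa [h0] using vanishesAt_zero) hin
    obtain ⟨d, rfl⟩ : ∃ d, n = d + 1 := Nat.exists_eq_succ_of_ne_zero (by lia)
    refine ih (P.eraseLead + C b * X ^ d).natDegree ?_ (i := i) ?_ ?_ rfl
    · refine Nat.lt_succ_of_le (natDegree_add_le_of_degree_le ?_ (natDegree_C_mul_X_pow_le b d))
      exact (eraseLead_natDegree_le P).trans (by lia)
    · have hsplit := hP
      rw [← P.eraseLead_add_C_mul_X_pow, hn] at hsplit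
      simp only [map_add, map_mul, aeval_C, map_pow, aeval_X] at hsplit ⊢
      rw [← hsplit, pow_succ', ← mul_assoc]
      exact congrArg (fun w => _ + w * z ^ d) hb
    · rw [coeff_add, eraseLead_coeff_of_ne _ (hn ▸ hin), coeff_C_mul_X_pow]
      split_ifs with hid
      · intro hv
        have hb_vanishes : VanishesAt A (b : K) := hb ▸ hlead.mul_right hz
        exact hi (by simpa using hv.sub hb_vanishes)
      · simpa using hi

theorem exists_mul_mem_affineRing [IsAlgClosed k] [FiniteDimensional k⟮x⟯ K] [IsPlace A]
    (hx : Transcendental k x) (hxA : x ∈ A) {z : K} (hz : z ∈ A) :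
    ∃ e ∈ affineRing k x, ¬ VanishesAt A e ∧ e * z ∈ affineRing k x := by
  have hdep : ¬ LinearIndependent k⟮x⟯
      (fun i : Fin (Module.finrank k⟮x⟯ K + 1) => z ^ (i : ℕ)) := fun hli => by
    simpa using hli.fintype_card_le_finrank
  rw [linearIndependent_adjoin_simple_iff hx] at hdep
  push Not at hdep
  obtain ⟨p, hsum, hp⟩ := hdep
  obtain ⟨q, ⟨i, hi⟩, hq⟩ := exists_relation_not_vanishesAt hx hxA hp hsum
  let P : (affineRing k x)[X] := ∑ l : Fin _, C ⟨_, aeval_mem_affineRing x (q l)⟩ * X ^ (l : ℕ)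
  have hcoeff : P.coeff i = ⟨_, aeval_mem_affineRing x (q i)⟩ := by
    simp [P, coeff_C_mul, coeff_X_pow, Fin.val_inj]
  refine exists_mul_mem_of_aeval_eq_zero hz (P := P) ?_ (i := i) (hcoeff ▸ hi)
  simp only [P, map_sum, map_mul, map_pow, aeval_C, aeval_X]
  exact hq

end LocalFractions

/-- `x` defines a map of degree three from the curve with function field `K` to `ℙ¹`. -/
structure IsTrigonalMap (k : Type*) {K : Type*} [Field k] [Field K] [Algebra k K] (x : K) :
    Prop where
  transcendental : Transcendental k x
  finrank_eq : Module.finrank k⟮x⟯ K = 3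

namespace IsTrigonalMap

variable (h : IsTrigonalMap k x)

include h

lemma ne_zero : x ≠ 0 := ne_zero_of_transcendental h.transcendental

lemma aeval_ne_zero {p : k[X]} (hp : p ≠ 0) : aeval x p ≠ 0 :=
  mt (transcendental_iff.1 h.transcendental p) hp

lemma sub_algebraMap_ne_zero (c : k) : x - algebraMap k K c ≠ 0 := by
  simpa using h.aeval_ne_zero (X_sub_C_ne_zero c)

lemma finiteDimensional : FiniteDimensional k⟮x⟯ K :=
  Module.finite_of_finrank_pos (by rw [h.finrank_eq]; norm_num)

lemma inv : IsTrigonalMap k x⁻¹ where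
  transcendental hinv := h.transcendental (by simpa using hinv.inv)
  finrank_eq := by rw [adjoin_simple_inv, h.finrank_eq]

end IsTrigonalMap

/-- The bounds on polynomial coefficients under which `p + q α + r β` has poles of order at most
`N` along the poles of `x`, when `α` and `β` have poles of orders `m` and `n` there. -/
def DegreeBound (m n N : ℕ) (p q r : k[X]) : Prop :=
  p.natDegree ≤ N ∧ (q = 0 ∨ q.natDegree + m ≤ N) ∧ (r = 0 ∨ r.natDegree + n ≤ N)

/-- `1, α, β` is a basis of `affineRing k x` over `k[x]` which, after division by `1, x ^ m, x ^ n`,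
becomes a basis of `affineRing k x⁻¹` over `k[x⁻¹]`.  In other words, the push-forward of the
structure sheaf along `x` is `𝒪 ⊕ 𝒪(-m) ⊕ 𝒪(-n)`. -/
structure IsReducedBasis (k : Type*) {K : Type*} [Field k] [Field K] [Algebra k K]
    (x α β : K) (m n : ℕ) : Prop where
  left_mem : α ∈ affineRing k x
  right_mem : β ∈ affineRing k x
  left_mul_mem : α * x⁻¹ ^ m ∈ affineRing k x⁻¹
  right_mul_mem : β * x⁻¹ ^ n ∈ affineRing k x⁻¹
  one_le : 1 ≤ m
  le : m ≤ n
  exists_eq : ∀ y ∈ affineRing k x, ∃ p q r : k[X], y = aeval x p + aeval x q * α + aeval x r * β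
  degreeBound : ∀ (p q r : k[X]) (j : ℕ),
    (aeval x p + aeval x q * α + aeval x r * β) * x⁻¹ ^ j ∈ affineRing k x⁻¹ →
    DegreeBound m n j p q r

section Exists

variable {ι : Type*} {ω : ι → K} {e : ι → ℕ}

lemma IsGradedFamily.comp_equiv (h : IsGradedFamily k x ω e) (σ : ι ≃ ι) :
    IsGradedFamily k x (ω ∘ σ) (e ∘ σ) where
  linearIndependent := h.linearIndependent.comp _ σ.injective
  mem i := h.mem (σ i)
  mul_inv_pow_mem i := h.mul_inv_pow_mem (σ i)

lemma IsReducedFamily.comp_equiv [Fintype ι] (h : IsReducedFamily k x ω e) (σ : ι ≃ ι) :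
    IsReducedFamily k x (ω ∘ σ) (e ∘ σ) where
  toIsGradedFamily := h.toIsGradedFamily.comp_equiv σ
  sum_le h' := (Equiv.sum_comp σ e).trans_le (h.sum_le h')

variable [IsAlgClosed k]

lemma IsGradedFamily.exists_algebraMap_eq (h : IsGradedFamily k x ω e) {i : ι} (hi : e i = 0) :
    ∃ c : k, c ≠ 0 ∧ algebraMap k K c = ω i := by
  obtain ⟨c, hc⟩ := exists_algebraMap_eq_of_mem_affineRing_inv (h.mem i)
    (by simpa [hi] using h.mul_inv_pow_mem i)
  refine ⟨c, fun h0 => h.linearIndependent.ne_zero i ?_, hc⟩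
  rw [← hc, h0, map_zero]

lemma IsGradedFamily.eq_of_eq_zero (h : IsGradedFamily k x ω e) {i j : ι} (hi : e i = 0)
    (hj : e j = 0) : i = j := by
  obtain ⟨c, -, hc⟩ := h.exists_algebraMap_eq hi
  obtain ⟨d, hd0, hd⟩ := h.exists_algebraMap_eq hj
  refine h.linearIndependent.eq_of_smul_apply_eq_smul_apply (algebraMap k k⟮x⟯ d)
    (algebraMap k k⟮x⟯ c) i j (by simpa using hd0) ?_
  rw [algebraMap_smul, algebraMap_smul, Algebra.smul_def, Algebra.smul_def, hc, hd, mul_comm]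

theorem exists_isReducedBasis (h : IsTrigonalMap k x) :
    ∃ (α β : K) (m n : ℕ), IsReducedBasis k x α β m n := by
  have := h.finiteDimensional
  have hx := h.transcendental
  obtain ⟨ω₀, e₀, h₀⟩ := exists_isReducedFamily hx
    (Module.finBasisOfFinrankEq k⟮x⟯ K h.finrank_eq).linearIndependent
  obtain ⟨ω, e, hω, hmono⟩ : ∃ (ω : Fin 3 → K) (e : Fin 3 → ℕ),
      IsReducedFamily k x ω e ∧ Monotone e :=
    ⟨_, _, h₀.comp_equiv (Tuple.sort e₀), Tuple.monotone_sort e₀⟩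
  have hspan {y : K} := hω.exists_eq_sum hx (y := y) (by simp [h.finrank_eq])
  obtain ⟨q, hq⟩ := hspan (one_mem _)
  have he0 : e 0 = 0 := by
    by_contra he0
    have hq0 (l) : q l = 0 := (hω.eq_zero_or_natDegree_add_le hx (j := 0)
      (by simp [← hq, one_mem]) l).resolve_right
        fun hl => he0 (by have := hmono (Fin.zero_le l); lia)
    simp only [hq0, map_zero, zero_mul, Finset.sum_const_zero, one_ne_zero] at hq
  obtain ⟨c, hc0, hc⟩ := hω.exists_algebraMap_eq he0
  have he1 : 1 ≤ e 1 := Nat.one_le_iff_ne_zero.2 fun he1 => by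
    simpa using hω.eq_of_eq_zero he0 he1
  refine ⟨ω 1, ω 2, e 1, e 2, hω.mem 1, hω.mem 2, hω.mul_inv_pow_mem 1, hω.mul_inv_pow_mem 2, he1,
    hmono (by decide), fun y hy => ?_, fun p q r j hj => ?_⟩
  · obtain ⟨q, rfl⟩ := hspan hy
    exact ⟨C c * q 0, q 1, q 2, by simp [Fin.sum_univ_three, ← hc, mul_comm]⟩
  · have hdeg := hω.eq_zero_or_natDegree_add_le hx (q := ![C c⁻¹ * p, q, r]) (j := j) (by
      have hcancel : aeval x (C c⁻¹ * p) * ω 0 = aeval x p := by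
        rw [map_mul, aeval_C, ← hc, mul_right_comm, ← map_mul, inv_mul_cancel₀ hc0, map_one,
          one_mul]
      rw [Fin.sum_univ_three]
      exact hcancel.symm ▸ hj)
    refine ⟨?_, hdeg 1, hdeg 2⟩
    rcases hdeg 0 with h0 | h0
    · simp_all
    · simpa [he0, hc0, natDegree_C_mul] using h0

end Exists

end TrigonalMaps

section CubicBases

variable {k K : Type*} [Field k] [Field K] [Algebra k K] {x α β : K} {m n : ℕ} {a b c d : k[X]}

/-- `1, α, β` is a basis of `affineRing k x` over `k[x]` with `α β ∈ k[x]`.  Associativity then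
forces the multiplication table below (Levi, Delone–Faddeev): the ring is determined by the binary
cubic form with coefficients `a, b, c, d`, and `α / a(x)` is a root of
`a T ^ 3 - b T ^ 2 + c T - d`. -/
structure IsCubicBasis (k : Type*) {K : Type*} [Field k] [Field K] [Algebra k K]
    (x α β : K) (a b c d : k[X]) : Prop where
  isTrigonalMap : IsTrigonalMap k x
  left_mem : α ∈ affineRing k x
  right_mem : β ∈ affineRing k x
  mul_eq : α * β = aeval x a * aeval x d
  left_sq : α * α = -(aeval x a * aeval x c) + aeval x b * α + aeval x a * β
  right_sq : β * β = -(aeval x d * aeval x b) + aeval x d * α + aeval x c * β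
  exists_eq : ∀ y ∈ affineRing k x, ∃ p q r : k[X], y = aeval x p + aeval x q * α + aeval x r * β
  eq_zero : ∀ p q r : k[X], aeval x p + aeval x q * α + aeval x r * β = 0 → p = 0 ∧ q = 0 ∧ r = 0

namespace IsCubicBasis

variable (h : IsCubicBasis k x α β a b c d)

include h

lemma swap : IsCubicBasis k x β α d c b a where
  isTrigonalMap := h.isTrigonalMap
  left_mem := h.right_mem
  right_mem := h.left_mem
  mul_eq := by rw [mul_comm, h.mul_eq, mul_comm]
  left_sq := by rw [h.right_sq]; ring
  right_sq := by rw [h.left_sq]; ring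
  exists_eq y hy := by
    obtain ⟨p, q, r, hpqr⟩ := h.exists_eq y hy
    exact ⟨p, r, q, by rw [hpqr]; ring⟩
  eq_zero p q r hpqr := by
    obtain ⟨hp, hr, hq⟩ := h.eq_zero p r q (by linear_combination hpqr)
    exact ⟨hp, hq, hr⟩

lemma left_ne_zero : α ≠ 0 := fun h0 => by
  simpa using (h.eq_zero 0 1 0 (by simp [h0])).2.1

lemma leading_ne_zero : a ≠ 0 := by
  rintro rfl
  have hα : α = aeval x b := mul_left_cancel₀ h.left_ne_zero <| by
    simpa [mul_comm] using h.left_sq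
  simpa using (h.eq_zero (-b) 1 0 (by simp [hα])).2.1

lemma constant_ne_zero : d ≠ 0 := h.swap.leading_ne_zero

-- The substitution `T ↦ T - z` in the cubic `a T ^ 3 - b T ^ 2 + c T - d`.
lemma shift (z : k) : IsCubicBasis k x (α - aeval x (C z * a))
    (β + algebraMap k K z * α + aeval x (C (z ^ 2) * a - C z * b))
    a (b - C (3 * z) * a) (c - C (2 * z) * b + C (3 * z ^ 2) * a)
    (d - C z * c + C (z ^ 2) * b - C (z ^ 3) * a) where
  isTrigonalMap := h.isTrigonalMap
  left_mem := sub_mem h.left_mem (aeval_mem_affineRing _ _)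
  right_mem := add_mem (add_mem h.right_mem
    (mul_mem (Subalgebra.algebraMap_mem _ _) h.left_mem)) (aeval_mem_affineRing _ _)
  mul_eq := by
    simp only [map_sub, map_add, map_mul, aeval_C, map_pow]
    linear_combination h.mul_eq + algebraMap k K z * h.left_sq
  left_sq := by
    simp only [map_sub, map_add, map_mul, aeval_C, map_pow, map_ofNat]
    linear_combination h.left_sq
  right_sq := by
    simp only [map_sub, map_add, map_mul, aeval_C, map_pow, map_ofNat]
    linear_combination h.right_sq + 2 * algebraMap k K z * h.mul_eq +
      algebraMap k K z ^ 2 * h.left_sq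
  exists_eq y hy := by
    obtain ⟨p, q, r, hpqr⟩ := h.exists_eq y hy
    refine ⟨p + (q - C z * r) * (C z * a) - r * (C (z ^ 2) * a - C z * b), q - C z * r, r, ?_⟩
    rw [hpqr]
    simp only [map_sub, map_add, map_mul, aeval_C, map_pow]
    ring
  eq_zero p q r hpqr := by
    obtain ⟨hp, hq, rfl⟩ := h.eq_zero
      (p - q * (C z * a) + r * (C (z ^ 2) * a - C z * b)) (q + C z * r) r (by
        simp only [map_sub, map_add, map_mul, aeval_C, map_pow] at hpqr ⊢
        linear_combination hpqr)
    obtain rfl : q = 0 := by simpa using hq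
    exact ⟨by simpa using hp, rfl, rfl⟩

end IsCubicBasis

namespace IsReducedBasis

variable (h : IsReducedBasis k x α β m n)

include h

lemma eq_zero (p q r : k[X]) (hpqr : aeval x p + aeval x q * α + aeval x r * β = 0) :
    p = 0 ∧ q = 0 ∧ r = 0 := by
  have hpole (p q r : k[X]) (hpqr : aeval x p + aeval x q * α + aeval x r * β = 0) :
      q = 0 ∧ r = 0 := by
    obtain ⟨-, hq, hr⟩ := h.degreeBound p q r 0 (by rw [hpqr, zero_mul]; exact zero_mem _)
    have := h.one_le
    have := h.le
    exact ⟨hq.resolve_right (by lia), hr.resolve_right (by lia)⟩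
  obtain ⟨rfl, rfl⟩ := hpole p q r hpqr
  exact ⟨(hpole 0 p 0 (by simp_all)).1, rfl, rfl⟩

lemma sub_aeval (hx : x ≠ 0) (u v : k[X]) (hu : u.natDegree ≤ m) (hv : v.natDegree ≤ n) :
    IsReducedBasis k x (α - aeval x u) (β - aeval x v) m n where
  left_mem := sub_mem h.left_mem (aeval_mem_affineRing _ _)
  right_mem := sub_mem h.right_mem (aeval_mem_affineRing _ _)
  left_mul_mem := by
    rw [sub_mul, ← aeval_inv_reflect hx hu]
    exact sub_mem h.left_mul_mem (aeval_mem_affineRing _ _)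
  right_mul_mem := by
    rw [sub_mul, ← aeval_inv_reflect hx hv]
    exact sub_mem h.right_mul_mem (aeval_mem_affineRing _ _)
  one_le := h.one_le
  le := h.le
  exists_eq y hy := by
    obtain ⟨p, q, r, hpqr⟩ := h.exists_eq y hy
    refine ⟨p + q * u + r * v, q, r, ?_⟩
    simp only [hpqr, map_add, map_mul]
    ring
  degreeBound p q r j hj := by
    obtain ⟨hp, hq, hr⟩ := h.degreeBound (p - q * u - r * v) q r j (by
      convert hj using 1
      simp only [map_sub, map_mul]
      ring)
    refine ⟨?_, hq, hr⟩
    have hqu : (q * u).natDegree ≤ j := by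
      rcases hq with rfl | hq
      · simp
      · exact natDegree_mul_le.trans (by lia)
    have hrv : (r * v).natDegree ≤ j := by
      rcases hr with rfl | hr
      · simp
      · exact natDegree_mul_le.trans (by lia)
    rw [show p = (p - q * u - r * v) + q * u + r * v by ring]
    exact natDegree_add_le_of_degree_le (natDegree_add_le_of_degree_le hp hqu) hrv

lemma exists_mul_eq_aeval (hx : x ≠ 0) :
    ∃ (α' β' : K) (p : k[X]), IsReducedBasis k x α' β' m n ∧ α' * β' = aeval x p := by
  obtain ⟨p, q, r, hpqr⟩ := h.exists_eq _ (mul_mem h.left_mem h.right_mem)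
  obtain ⟨-, hq, hr⟩ := h.degreeBound p q r (m + n) (by
    rw [← hpqr, pow_add, mul_mul_mul_comm]
    exact mul_mem h.left_mul_mem h.right_mul_mem)
  refine ⟨_, _, p + r * q, h.sub_aeval hx r q ?_ ?_, ?_⟩
  · rcases hr with rfl | hr
    · simp
    · lia
  · rcases hq with rfl | hq
    · simp
    · lia
  · simp only [map_add, map_mul]
    linear_combination hpqr

end IsReducedBasis

/-- A reduced basis with `α β ∈ k[x]`: the coefficients `a, b, c, d` of the binary cubic form are
sections of `𝒪(2m - n)`, `𝒪(m)`, `𝒪(n)`, `𝒪(2n - m)` on `ℙ¹`. -/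
structure IsReducedCubicBasis (k : Type*) {K : Type*} [Field k] [Field K] [Algebra k K]
    (x α β : K) (m n : ℕ) (a b c d : k[X]) : Prop
    extends IsCubicBasis k x α β a b c d, IsReducedBasis k x α β m n where
  natDegree_a_add_le : a.natDegree + n ≤ 2 * m
  natDegree_b_le : b.natDegree ≤ m
  natDegree_c_le : c.natDegree ≤ n
  natDegree_d_add_le : d.natDegree + m ≤ 2 * n

lemma IsReducedBasis.exists_isReducedCubicBasis (h : IsReducedBasis k x α β m n)
    (hx : IsTrigonalMap k x) {E : k[X]} (hE : α * β = aeval x E) :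
    ∃ a b c d : k[X], IsReducedCubicBasis k x α β m n a b c d := by
  obtain ⟨A₀, b, a, hA⟩ := h.exists_eq _ (mul_mem h.left_mem h.left_mem)
  obtain ⟨B₀, d, c, hB⟩ := h.exists_eq _ (mul_mem h.right_mem h.right_mem)
  obtain ⟨-, hb, ha⟩ := h.degreeBound A₀ b a (2 * m) (by
    rw [← hA, two_mul, pow_add, mul_mul_mul_comm]
    exact mul_mem h.left_mul_mem h.left_mul_mem)
  obtain ⟨-, hd, hc⟩ := h.degreeBound B₀ d c (2 * n) (by
    rw [← hB, two_mul, pow_add, mul_mul_mul_comm]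
    exact mul_mem h.right_mul_mem h.right_mul_mem)
  -- Associativity: `(α α) β = α (α β)` and `α (β β) = (α β) β`.
  obtain ⟨-, hadE, hA₀⟩ := h.eq_zero (b * E + a * B₀) (a * d - E) (A₀ + a * c) (by
    simp only [map_sub, map_add, map_mul]
    linear_combination (-β) * hA - aeval x a * hB + (α - aeval x b) * hE)
  obtain ⟨-, hB₀, -⟩ := h.eq_zero (d * A₀ + c * E) (B₀ + d * b) (d * a - E) (by
    simp only [map_sub, map_add, map_mul]
    linear_combination (-α) * hB - aeval x d * hA + (β - aeval x c) * hE)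
  obtain rfl : E = a * d := (sub_eq_zero.1 hadE).symm
  obtain rfl : A₀ = -(a * c) := eq_neg_of_add_eq_zero_left hA₀
  obtain rfl : B₀ = -(d * b) := eq_neg_of_add_eq_zero_left hB₀
  have hcubic : IsCubicBasis k x α β a b c d :=
    ⟨hx, h.left_mem, h.right_mem, by rw [hE, map_mul], by simpa using hA, by simpa using hB,
      h.exists_eq, h.eq_zero⟩
  refine ⟨a, b, c, d, { hcubic, h with
    natDegree_a_add_le := ha.resolve_left hcubic.leading_ne_zero
    natDegree_b_le := ?_
    natDegree_c_le := ?_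
    natDegree_d_add_le := hd.resolve_left hcubic.constant_ne_zero }⟩
  · rcases hb with rfl | hb
    · simp
    · lia
  · rcases hc with rfl | hc
    · simp
    · lia

theorem IsTrigonalMap.exists_isReducedCubicBasis [IsAlgClosed k] (h : IsTrigonalMap k x) :
    ∃ (α β : K) (m n : ℕ) (a b c d : k[X]), IsReducedCubicBasis k x α β m n a b c d := by
  obtain ⟨α₀, β₀, m, n, h₀⟩ := exists_isReducedBasis h
  obtain ⟨α, β, E, hαβ, hE⟩ := h₀.exists_mul_eq_aeval h.ne_zero
  exact ⟨α, β, m, n, hαβ.exists_isReducedCubicBasis h hE⟩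

lemma exists_aeval_inv_mul_inv_pow (hx : x ≠ 0) {q : k[X]} {j : ℕ}
    (hq : q = 0 ∨ q.natDegree + m ≤ j) :
    ∃ q' : k[X], aeval x⁻¹ q' * x⁻¹ ^ m = aeval x q * x⁻¹ ^ j := by
  rcases hq with rfl | hq
  · exact ⟨0, by simp⟩
  · refine ⟨reflect (j - m) q, ?_⟩
    rw [aeval_inv_reflect hx (by lia), mul_assoc, ← pow_add, Nat.sub_add_cancel (by lia)]

namespace IsReducedBasis

variable (h : IsReducedBasis k x α β m n)

include h

lemma exists_eq_inv (hx : IsTrigonalMap k x) {y : K} (hy : y ∈ affineRing k x⁻¹) :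
    ∃ p q r : k[X], y = aeval x⁻¹ p + aeval x⁻¹ q * (α * x⁻¹ ^ m) +
      aeval x⁻¹ r * (β * x⁻¹ ^ n) := by
  have := hx.inv.finiteDimensional
  obtain ⟨j, hj⟩ := exists_mul_inv_pow_mem_affineRing_inv hy
  rw [inv_inv] at hj
  obtain ⟨p, q, r, hpqr⟩ := h.exists_eq _ hj
  have hy_eq : y = (aeval x p + aeval x q * α + aeval x r * β) * x⁻¹ ^ j := by
    rw [← hpqr, mul_assoc, pow_mul_inv_pow_self hx.ne_zero, mul_one]
  obtain ⟨hp, hq, hr⟩ := h.degreeBound p q r j (hy_eq ▸ hy)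
  obtain ⟨q', hq'⟩ := exists_aeval_inv_mul_inv_pow hx.ne_zero hq
  obtain ⟨r', hr'⟩ := exists_aeval_inv_mul_inv_pow hx.ne_zero hr
  refine ⟨reflect j p, q', r', ?_⟩
  rw [aeval_inv_reflect hx.ne_zero hp, hy_eq]
  linear_combination (-α) * hq' - β * hr'

lemma eq_zero_inv (hx : x ≠ 0) (p q r : k[X])
    (hpqr : aeval x⁻¹ p + aeval x⁻¹ q * (α * x⁻¹ ^ m) + aeval x⁻¹ r * (β * x⁻¹ ^ n) = 0) :
    p = 0 ∧ q = 0 ∧ r = 0 := by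
  set N := p.natDegree + q.natDegree + r.natDegree
  have hreflect {f : k[X]} (hf : f.natDegree ≤ N) :
      aeval x (reflect N f) = aeval x⁻¹ f * x ^ N := by
    simpa using aeval_inv_reflect (inv_ne_zero hx) hf
  obtain ⟨hp, hq, hr⟩ := h.eq_zero (reflect N p * X ^ n) (reflect N q * X ^ (n - m))
    (reflect N r) (by
      simp only [map_mul, map_pow, aeval_X, hreflect (f := p) (by lia),
        hreflect (f := q) (by lia), hreflect (f := r) (by lia)]
      apply mul_right_cancel₀ (pow_ne_zero n (inv_ne_zero hx))
      linear_combination x ^ N * hpqr + aeval x⁻¹ p * x ^ N * pow_mul_inv_pow_self hx n +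
        aeval x⁻¹ q * x ^ N * α * pow_sub_mul_inv_pow hx h.le)
  exact ⟨by simpa using hp, by simpa using hq, by simpa using hr⟩

end IsReducedBasis

lemma IsReducedCubicBasis.inv (h : IsReducedCubicBasis k x α β m n a b c d) :
    IsCubicBasis k x⁻¹ (α * x⁻¹ ^ m) (β * x⁻¹ ^ n) (reflect (2 * m - n) a) (reflect m b)
      (reflect n c) (reflect (2 * n - m) d) := by
  have hx := h.isTrigonalMap.ne_zero
  have ha := h.natDegree_a_add_le
  have hd := h.natDegree_d_add_le
  have ea := aeval_inv_reflect hx (p := a) (N := 2 * m - n) (by lia)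
  have eb := aeval_inv_reflect hx h.natDegree_b_le
  have ec := aeval_inv_reflect hx h.natDegree_c_le
  have ed := aeval_inv_reflect hx (p := d) (N := 2 * n - m) (by lia)
  have hm : x⁻¹ ^ (2 * m - n) * x⁻¹ ^ n = x⁻¹ ^ m * x⁻¹ ^ m := by
    rw [← pow_add, ← pow_add]; congr 1; lia
  have hn : x⁻¹ ^ (2 * n - m) * x⁻¹ ^ m = x⁻¹ ^ n * x⁻¹ ^ n := by
    rw [← pow_add, ← pow_add]; congr 1; lia
  have hmn : x⁻¹ ^ (2 * m - n) * x⁻¹ ^ (2 * n - m) = x⁻¹ ^ m * x⁻¹ ^ n := by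
    rw [← pow_add, ← pow_add]; congr 1; lia
  refine ⟨h.isTrigonalMap.inv, h.left_mul_mem, h.right_mul_mem, ?_, ?_, ?_,
    fun y => h.exists_eq_inv h.isTrigonalMap, h.eq_zero_inv hx⟩
  · rw [ea, ed]
    linear_combination (x⁻¹ ^ m * x⁻¹ ^ n) * h.mul_eq - aeval x a * aeval x d * hmn
  · rw [ea, eb, ec]
    linear_combination (x⁻¹ ^ m * x⁻¹ ^ m) * h.left_sq + aeval x a * aeval x c * hm -
      aeval x a * β * hm
  · rw [ed, eb, ec]
    linear_combination (x⁻¹ ^ n * x⁻¹ ^ n) * h.right_sq + aeval x d * aeval x b * hn -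
      aeval x d * α * hn

end CubicBases

section CubicGenerators

variable {k K : Type*} [Field k] [Field K] [Algebra k K] {x α β θ : K} {a b c d : k[X]}

namespace IsCubicBasis

variable (h : IsCubicBasis k x α β a b c d)

include h

-- Otherwise `α / (x - c₀)` would be integral: the curve `a T ^ 3 - b T ^ 2 + c T - d = 0` is
-- smooth at the points with `T = ∞`.
lemma eval_b_ne_zero {c₀ : k} (ha : a.eval c₀ = 0) (ha' : a.derivative.eval c₀ = 0) :
    b.eval c₀ ≠ 0 := fun hb => by
  obtain ⟨a₁, rfl⟩ := dvd_iff_isRoot.mpr ha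
  obtain ⟨b₁, rfl⟩ := dvd_iff_isRoot.mpr hb
  have ha₁ : a₁.eval c₀ = 0 := by simpa [derivative_mul] using ha'
  obtain ⟨a₂, rfl⟩ := dvd_iff_isRoot.mpr ha₁
  have hx := h.isTrigonalMap.sub_algebraMap_ne_zero c₀
  have hmem : α / (x - algebraMap k K c₀) ∈ affineRing k x := by
    refine mem_affineRing_of_mul_self_eq (u := aeval x a₂ * (β - aeval x c))
      (v := aeval x b₁)
      (mul_mem (aeval_mem_affineRing _ _) (sub_mem h.right_mem (aeval_mem_affineRing _ _)))
      (aeval_mem_affineRing _ _) ?_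
    have hsq := h.left_sq
    simp only [map_mul, map_sub, aeval_X, aeval_C] at hsq
    field_simp
    linear_combination hsq
  obtain ⟨p, q, r, hpqr⟩ := h.exists_eq _ hmem
  obtain ⟨-, hq, -⟩ := h.eq_zero ((X - C c₀) * p) ((X - C c₀) * q - 1) ((X - C c₀) * r) (by
    simp only [map_mul, map_sub, aeval_X, aeval_C, map_one]
    rw [div_eq_iff hx] at hpqr
    linear_combination -hpqr)
  simpa using congrArg (eval c₀) hq

lemma eval_derivative_ne_zero {c₀ z : k}
    (hroot : a.eval c₀ * z ^ 3 - b.eval c₀ * z ^ 2 + c.eval c₀ * z - d.eval c₀ = 0)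
    (hdouble : 3 * a.eval c₀ * z ^ 2 - 2 * b.eval c₀ * z + c.eval c₀ = 0) :
    a.derivative.eval c₀ * z ^ 3 - b.derivative.eval c₀ * z ^ 2 + c.derivative.eval c₀ * z
      - d.derivative.eval c₀ ≠ 0 := fun hderiv => by
  refine (h.shift z).swap.eval_b_ne_zero (c₀ := c₀) ?_ ?_ ?_
  · simp only [eval_sub, eval_add, eval_mul, eval_C]
    linear_combination -hroot
  · simp only [derivative_add, derivative_sub, derivative_C_mul, eval_add, eval_sub, eval_mul,
      eval_C]
    linear_combination -hderiv
  · simp only [eval_sub, eval_add, eval_mul, eval_C]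
    linear_combination hdouble

variable [IsAlgClosed k]

lemma not_common_root {c₀ : k} (ha : a.IsRoot c₀) (hb : b.IsRoot c₀) (hc : c.IsRoot c₀) :
    ¬ d.IsRoot c₀ := fun hd => by
  rw [IsRoot.def] at ha hb hc hd
  let g : k[X] := C (a.derivative.eval c₀) * X ^ 3 - C (b.derivative.eval c₀) * X ^ 2 +
    C (c.derivative.eval c₀) * X - C (d.derivative.eval c₀)
  by_cases hdeg : g.degree = 0
  · have hcoeff : g.coeff 3 = 0 := coeff_eq_zero_of_degree_lt (by rw [hdeg]; norm_num)
    exact h.eval_b_ne_zero ha (by simpa [g, coeff_X, coeff_C] using hcoeff) hb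
  · obtain ⟨z, hz⟩ := IsAlgClosed.exists_root g hdeg
    exact h.eval_derivative_ne_zero (c₀ := c₀) (z := z) (by simp [ha, hb, hc, hd])
      (by simp [ha, hb, hc]) (by simpa [g] using hz)

lemma exists_bezout : ∃ u v w t : k[X], u * a + v * b + w * c + t * d = 1 := by
  let I : Ideal k[X] := Ideal.span {a, b, c, d}
  have hI : I = ⊤ := by
    by_contra hI
    obtain ⟨g, hg⟩ := (inferInstance : I.IsPrincipal)
    have hdvd {y} (hy : y ∈ ({a, b, c, d} : Set k[X])) : g ∣ y :=
      Ideal.mem_span_singleton.1 (hg.le (Ideal.subset_span hy))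
    obtain ⟨z, hz⟩ := IsAlgClosed.exists_root g fun hdeg => hI <| hg.trans <|
      Ideal.span_singleton_eq_top.2 (isUnit_iff_degree_eq_zero.2 hdeg)
    exact h.not_common_root (hz.dvd (hdvd (by simp))) (hz.dvd (hdvd (by simp)))
      (hz.dvd (hdvd (by simp))) (hz.dvd (hdvd (by simp)))
  have hone := (Ideal.eq_top_iff_one I).1 hI
  simp only [I, Ideal.mem_span_insert, Ideal.mem_span_singleton'] at hone
  obtain ⟨u, _, ⟨v, _, ⟨w, _, ⟨t, rfl⟩, rfl⟩, rfl⟩, huvwt⟩ := hone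
  exact ⟨u, v, w, t, by rw [huvwt]; ring⟩

end IsCubicBasis

/-- `θ` is a nonzero root of the cubic `a(x) T ^ 3 - b(x) T ^ 2 + c(x) T - d(x)` attached to a
cubic basis; the basis is then `1`, `a θ`, `a θ ^ 2 - b θ + c`. -/
structure IsCubicGenerator (k : Type*) {K : Type*} [Field k] [Field K] [Algebra k K]
    (x θ : K) (a b c d : k[X]) : Prop where
  ne_zero : θ ≠ 0
  isCubicBasis : IsCubicBasis k x (aeval x a * θ)
    (aeval x a * θ ^ 2 - aeval x b * θ + aeval x c) a b c d

lemma IsCubicBasis.isCubicGenerator (h : IsCubicBasis k x α β a b c d) :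
    IsCubicGenerator k x (α / aeval x a) a b c d := by
  have ha := h.isTrigonalMap.aeval_ne_zero h.leading_ne_zero
  have hα : aeval x a * (α / aeval x a) = α := mul_div_cancel₀ _ ha
  have hβ : aeval x a * (α / aeval x a) ^ 2 - aeval x b * (α / aeval x a) + aeval x c = β := by
    field_simp
    linear_combination h.left_sq
  exact ⟨div_ne_zero h.left_ne_zero ha, by rwa [hα, hβ]⟩

namespace IsCubicGenerator

variable (h : IsCubicGenerator k x θ a b c d)

include h

lemma root : aeval x a * θ ^ 3 - aeval x b * θ ^ 2 + aeval x c * θ - aeval x d = 0 := by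
  apply mul_left_cancel₀ (h.isCubicBasis.isTrigonalMap.aeval_ne_zero h.isCubicBasis.leading_ne_zero)
  linear_combination h.isCubicBasis.mul_eq

lemma inv : IsCubicGenerator k x θ⁻¹ d c b a := by
  have hθ := h.ne_zero
  have hα : aeval x d * θ⁻¹ = aeval x a * θ ^ 2 - aeval x b * θ + aeval x c := by
    field_simp; linear_combination -h.root
  have hβ : aeval x d * θ⁻¹ ^ 2 - aeval x c * θ⁻¹ + aeval x b = aeval x a * θ := by
    field_simp; linear_combination -h.root
  exact ⟨inv_ne_zero hθ, by rw [hα, hβ]; exact h.isCubicBasis.swap⟩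

lemma eq_zero (p q r : k[X]) (hpqr : aeval x p + aeval x q * θ + aeval x r * θ ^ 2 = 0) :
    p = 0 ∧ q = 0 ∧ r = 0 := by
  have ha := h.isCubicBasis.leading_ne_zero
  obtain ⟨hp, hq, hr⟩ := h.isCubicBasis.eq_zero (a * a * p - a * r * c) (a * q + r * b) (a * r) (by
    simp only [map_sub, map_add, map_mul]
    linear_combination aeval x a * aeval x a * hpqr)
  obtain rfl : r = 0 := by simpa [ha] using hr
  obtain rfl : q = 0 := by simpa [ha] using hq
  exact ⟨by simpa [ha] using hp, rfl, rfl⟩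

lemma exists_eq {y : K} (hy : y ∈ affineRing k x) :
    ∃ p q r : k[X], y = aeval x p + aeval x q * θ + aeval x r * (aeval x a * θ ^ 2) := by
  obtain ⟨p, q, r, hpqr⟩ := h.isCubicBasis.exists_eq y hy
  refine ⟨p + r * c, q * a - r * b, r, ?_⟩
  rw [hpqr]
  simp only [map_sub, map_add, map_mul]
  ring

end IsCubicGenerator

/-- `e` is a section, over the chart `x ≠ ∞`, of the pull-back of `𝒪(1)` along `θ`. -/
def IsTwistedSection (k : Type*) {K : Type*} [Field k] [Field K] [Algebra k K] (x θ e : K) : Prop :=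
  ∀ A : Subalgebra k K, IsPlace A → x ∈ A → (θ ∈ A → e ∈ A) ∧ (θ⁻¹ ∈ A → e * θ⁻¹ ∈ A)

namespace IsCubicGenerator

variable [IsAlgClosed k] (h : IsCubicGenerator k x θ a b c d) {e : K}

include h

-- Since `a, b, c, d` generate the unit ideal, the ideal of denominators of `θ` is generated by
-- `a`, `a θ - b`, `a θ ^ 2 - b θ + c`.
lemma exists_eq_add_mul (he : IsTwistedSection k x θ e) :
    ∃ P ∈ affineRing k x, ∃ Q ∈ affineRing k x, e = P + Q * θ := by
  have hdenom {w : K} (hw : w ∈ affineRing k x) (hwθ : w * θ ∈ affineRing k x) :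
      e * w ∈ affineRing k x := by
    rw [mem_affineRing_iff] at hw hwθ ⊢
    intro A hA hxA
    rcases hA.mem_or_inv_mem θ with hθ | hθ
    · exact mul_mem ((he A hA hxA).1 hθ) (hw A hA hxA)
    · have := mul_mem ((he A hA hxA).2 hθ) (hwθ A hA hxA)
      rwa [mul_comm w, ← mul_assoc, mul_assoc e, inv_mul_cancel₀ h.ne_zero, mul_one] at this
  have hroot := h.root
  have hmem (p : k[X]) : aeval x p ∈ affineRing k x := aeval_mem_affineRing x p
  have hα := h.isCubicBasis.left_mem
  have hβ := h.isCubicBasis.right_mem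
  have ha := hdenom (hmem a) hα
  have hb := hdenom (w := aeval x a * θ - aeval x b) (sub_mem hα (hmem b)) (by
    convert sub_mem hβ (hmem c) using 1; ring)
  have hc := hdenom hβ (by convert hmem d using 1; linear_combination hroot)
  obtain ⟨u, v, w, t, huvwt⟩ := h.isCubicBasis.exists_bezout
  replace huvwt := congrArg (aeval x) huvwt
  simp only [map_add, map_mul, map_one] at huvwt
  refine ⟨aeval x u * (e * aeval x a) - aeval x v * (e * (aeval x a * θ - aeval x b)) +
      aeval x w * (e * (aeval x a * θ ^ 2 - aeval x b * θ + aeval x c)),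
    add_mem (sub_mem (mul_mem (hmem u) ha) (mul_mem (hmem v) hb)) (mul_mem (hmem w) hc),
    aeval x v * (e * aeval x a) - aeval x w * (e * (aeval x a * θ - aeval x b)) +
      aeval x t * (e * (aeval x a * θ ^ 2 - aeval x b * θ + aeval x c)),
    add_mem (sub_mem (mul_mem (hmem v) ha) (mul_mem (hmem w) hb)) (mul_mem (hmem t) hc), ?_⟩
  linear_combination (-e) * huvwt - aeval x t * e * hroot

lemma exists_eq_of_isTwistedSection (he : IsTwistedSection k x θ e) :
    ∃ p q r : k[X], e = aeval x p + aeval x q * θ + aeval x r * (aeval x a * θ ^ 2) := by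
  obtain ⟨P, hP, Q, hQ, hPQ⟩ := h.exists_eq_add_mul he
  obtain ⟨p, q, r, hpqr⟩ := h.isCubicBasis.exists_eq P hP
  obtain ⟨p', q', r', hpqr'⟩ := h.isCubicBasis.exists_eq Q hQ
  refine ⟨p + r * c + r' * d, q * a - r * b + p', r + q', ?_⟩
  rw [hPQ, hpqr, hpqr']
  simp only [map_sub, map_add, map_mul]
  linear_combination aeval x r' * h.root

end IsCubicGenerator

end CubicGenerators

section Differentials

variable {k K : Type*} [Field k] [Field K] [Algebra k K] {x θ y z : K} {a b c d : k[X]}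
  {A : Subalgebra k K}

local notation "δ" => KaehlerDifferential.D k K

/-- The differentials of `K / k` that are regular at the place `A`. -/
def regularAt (A : Subalgebra k K) : Submodule A (Ω[K⁄k]) :=
  Submodule.span A (δ '' A)

lemma smul_mem_of_mem {M : Type*} [AddCommGroup M] [Module K M] {N : Submodule A M} {ω : M}
    (hy : y ∈ A) (hω : ω ∈ N) : y • ω ∈ N :=
  N.smul_mem ⟨y, hy⟩ hω

lemma D_mem_regularAt (hy : y ∈ A) : δ y ∈ regularAt A :=
  Submodule.subset_span ⟨y, hy, rfl⟩

lemma mem_regularAt_iff {ω : Ω[K⁄k]} :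
    ω ∈ regularAt A ↔ ω ∈ Set.range (KaehlerDifferential.map k k A K) := by
  constructor
  · intro hω
    induction hω using Submodule.span_induction with
    | mem _ hz =>
      obtain ⟨z, hz, rfl⟩ := hz
      exact ⟨KaehlerDifferential.D k A ⟨z, hz⟩, KaehlerDifferential.map_D k k A K _⟩
    | zero => exact ⟨0, map_zero _⟩
    | add _ _ _ _ hω hη =>
      obtain ⟨⟨ω, rfl⟩, ⟨η, rfl⟩⟩ := hω, hη
      exact ⟨ω + η, map_add _ _ _⟩
    | smul u _ _ hω =>
      obtain ⟨ω, rfl⟩ := hω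
      exact ⟨u • ω, map_smul _ _ _⟩
  · rintro ⟨η, rfl⟩
    have hη : η ∈ Submodule.span A (Set.range (KaehlerDifferential.D k A)) := by
      rw [KaehlerDifferential.span_range_derivation]; trivial
    induction hη using Submodule.span_induction with
    | mem _ hz =>
      obtain ⟨z, rfl⟩ := hz
      rw [KaehlerDifferential.map_D]
      exact D_mem_regularAt z.2
    | zero => rw [map_zero]; exact zero_mem _
    | add _ _ _ _ hω hη => rw [map_add]; exact add_mem hω hη
    | smul u _ _ hω => rw [map_smul]; exact (regularAt A).smul_mem u hω

lemma D_mem_span_of_mem_adjoin {s : Set K} (hs : s ⊆ A) (hy : y ∈ Algebra.adjoin k s) :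
    δ y ∈ Submodule.span A (δ '' s) := by
  have hle : Algebra.adjoin k s ≤ A := Algebra.adjoin_le hs
  induction hy using Algebra.adjoin_induction with
  | mem y hy => exact Submodule.subset_span ⟨y, hy, rfl⟩
  | algebraMap c => simp
  | add y z _ _ hy hz => simpa using add_mem hy hz
  | mul y z hyA hzA hy hz =>
    rw [Derivation.leibniz]
    exact add_mem (smul_mem_of_mem (hle hyA) hz) (smul_mem_of_mem (hle hzA) hy)

lemma exists_hasValueAt_of_vanishesAt [IsAlgClosed k] [Algebra.IsAlgebraic k⟮x⟯ K] [IsPlace A]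
    (hx : x ∈ A) (hz : z ≠ 0) (hzA : VanishesAt A z) : ∃ r : k, HasValueAt A x r := by
  obtain ⟨D, hD, hDz⟩ := exists_aeval_mul_mem_affineRing (k := k) x z⁻¹
  refine exists_hasValueAt_of_vanishesAt_aeval (p := D) hx (by rintro rfl; simp at hD) ?_
  simpa [hz] using hzA.mul_left (mem_affineRing_iff.1 hDz A inferInstance hx)

/-- The partial derivative with respect to `x` of `a(x) T ^ 3 - b(x) T ^ 2 + c(x) T - d(x)` at
`(x, θ)`. -/
def derivX (x θ : K) (a b c d : k[X]) : K :=
  aeval x (derivative a) * θ ^ 3 - aeval x (derivative b) * θ ^ 2 + aeval x (derivative c) * θ -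
    aeval x (derivative d)

/-- The partial derivative with respect to `T` of `a(x) T ^ 3 - b(x) T ^ 2 + c(x) T - d(x)` at
`(x, θ)`. -/
def derivT (x θ : K) (a b c : k[X]) : K :=
  3 * aeval x a * θ ^ 2 - 2 * aeval x b * θ + aeval x c

lemma derivX_mem (hx : x ∈ A) (hθ : θ ∈ A) : derivX x θ a b c d ∈ A := by
  have hmem (p : k[X]) : aeval x p ∈ A := aeval_mem hx p
  exact sub_mem (add_mem (sub_mem (mul_mem (hmem _) (pow_mem hθ _))
    (mul_mem (hmem _) (pow_mem hθ _))) (mul_mem (hmem _) hθ)) (hmem _)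

lemma derivT_mem (hx : x ∈ A) (hθ : θ ∈ A) : derivT x θ a b c ∈ A := by
  have hmem (p : k[X]) : aeval x p ∈ A := aeval_mem hx p
  exact add_mem (sub_mem (mul_mem (mul_mem (ofNat_mem A 3) (hmem _)) (pow_mem hθ _))
    (mul_mem (mul_mem (ofNat_mem A 2) (hmem _)) hθ)) (hmem _)

namespace IsCubicGenerator

section

variable (h : IsCubicGenerator k x θ a b c d)

include h

lemma derivX_smul_add_derivT_smul :
    derivX x θ a b c d • δ x + derivT x θ a b c • δ θ = 0 := by
  have hroot := congrArg δ h.root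
  simp only [map_add, map_sub, map_zero, Derivation.leibniz, Derivation.leibniz_pow,
    Derivation.map_aeval] at hroot
  rw [← hroot, derivX, derivT]
  module

lemma derivT_inv : derivT x θ⁻¹ d c b = derivT x θ a b c * θ⁻¹ := by
  have hθ := h.ne_zero
  rw [derivT, derivT]
  field_simp
  linear_combination (-3) * h.root

lemma mem_adjoin_of_mem_affineRing (hy : y ∈ affineRing k x) : y ∈ Algebra.adjoin k {x, θ} := by
  obtain ⟨p, q, r, rfl⟩ := h.exists_eq hy
  have hx : x ∈ Algebra.adjoin k {x, θ} := Algebra.subset_adjoin (by simp)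
  have hθ : θ ∈ Algebra.adjoin k {x, θ} := Algebra.subset_adjoin (by simp)
  exact add_mem (add_mem (aeval_mem hx p) (mul_mem (aeval_mem hx q) hθ))
    (mul_mem (aeval_mem hx r) (mul_mem (aeval_mem hx a) (pow_mem hθ 2)))

variable [IsAlgClosed k] [IsPlace A] (hx : x ∈ A) (hθ : θ ∈ A)

include hx hθ

lemma D_mem_span_pair (hz : z ∈ A) : δ z ∈ Submodule.span A {δ x, δ θ} := by
  have := h.isCubicBasis.isTrigonalMap.finiteDimensional
  have hspan {y : K} (hy : y ∈ affineRing k x) : δ y ∈ Submodule.span A {δ x, δ θ} := by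
    rw [← Set.image_pair]
    exact D_mem_span_of_mem_adjoin (Set.pair_subset hx hθ) (h.mem_adjoin_of_mem_affineRing hy)
  obtain ⟨e, he, heA, hez⟩ :=
    exists_mul_mem_affineRing h.isCubicBasis.isTrigonalMap.transcendental hx hz
  have heA' : e ∈ A := mem_affineRing_iff.1 he A inferInstance hx
  have he₀ : e ≠ 0 := ne_zero_of_not_vanishesAt heA' heA
  have hsepz : δ z = e⁻¹ • (δ (e * z) - z • δ e) := by
    rw [Derivation.leibniz, add_sub_cancel_right, inv_smul_smul₀ he₀]
  rw [hsepz]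
  exact smul_mem_of_mem (inv_mem_of_not_vanishesAt heA' heA)
    (sub_mem (hspan hez) (smul_mem_of_mem hz (hspan he)))

lemma regularAt_eq_span_pair : regularAt A = Submodule.span A {δ x, δ θ} := by
  refine le_antisymm (Submodule.span_le.2 ?_) (Submodule.span_mono ?_)
  · rintro _ ⟨z, hz, rfl⟩
    exact h.D_mem_span_pair hx hθ hz
  · exact Set.pair_subset ⟨x, hx, rfl⟩ ⟨θ, hθ, rfl⟩

omit [IsPlace A] hx hθ in
lemma span_D_pair_eq_top : Submodule.span K {δ x, δ θ} = ⊤ := by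
  rw [← top_le_iff, ← KaehlerDifferential.span_range_derivation, Submodule.span_le]
  rintro _ ⟨z, rfl⟩
  have := isPlace_top (k := k) (K := K)
  obtain ⟨u, v, huv⟩ := Submodule.mem_span_pair.1
    (h.D_mem_span_pair (A := ⊤) (z := z) Algebra.mem_top Algebra.mem_top Algebra.mem_top)
  exact Submodule.mem_span_pair.2 ⟨u, v, huv⟩

end

variable [IsAlgClosed k] (h : IsCubicGenerator k x θ a b c d)

include h

lemma exists_hasValueAt [IsPlace A] {c₀ : k} (hx : HasValueAt A x c₀) (hθ : θ ∈ A) :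
    ∃ z : k, HasValueAt A θ z := by
  let g : k[X] := C (a.eval c₀) * X ^ 3 - C (b.eval c₀) * X ^ 2 + C (c.eval c₀) * X - C (d.eval c₀)
  have hg : g ≠ 0 := fun hg => by
    have hcoeff (i : ℕ) : g.coeff i = 0 := by simp [hg]
    exact h.isCubicBasis.not_common_root (c₀ := c₀)
      (by simpa [g, coeff_X, coeff_C] using hcoeff 3)
      (by simpa [g, coeff_X, coeff_C] using hcoeff 2)
      (by simpa [g, coeff_X, coeff_C] using hcoeff 1)
      (by simpa [g, coeff_X, coeff_C] using hcoeff 0)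
  have hsub (p : k[X]) {w : K} (hw : w ∈ A) :
      VanishesAt A ((algebraMap k K (p.eval c₀) - aeval x p) * w) := by
    simpa using (hx.aeval p).neg.mul_right hw
  refine exists_hasValueAt_of_vanishesAt_aeval hθ hg ?_
  convert (((hsub a (pow_mem hθ 3)).sub (hsub b (pow_mem hθ 2))).add (hsub c hθ)).sub
    (hsub d (one_mem A)) using 1
  simp only [g, map_add, map_sub, map_mul, aeval_C, aeval_X, map_pow]
  linear_combination h.root

lemma not_vanishesAt_derivX [IsPlace A] (hx : x ∈ A) (hθ : θ ∈ A) (hδ : derivT x θ a b c ≠ 0)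
    (hT : VanishesAt A (derivT x θ a b c)) : ¬VanishesAt A (derivX x θ a b c d) := fun hX => by
  have := h.isCubicBasis.isTrigonalMap.finiteDimensional
  obtain ⟨c₀, hc₀⟩ := exists_hasValueAt_of_vanishesAt hx hδ hT
  obtain ⟨z, hz⟩ := h.exists_hasValueAt hc₀ hθ
  have hcubic (p q r s : k[X]) : HasValueAt A
      (aeval x p * θ ^ 3 - aeval x q * θ ^ 2 + aeval x r * θ - aeval x s)
      (p.eval c₀ * z ^ 3 - q.eval c₀ * z ^ 2 + r.eval c₀ * z - s.eval c₀) :=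
    ((((hc₀.aeval p).mul (hz.pow 3)).sub ((hc₀.aeval q).mul (hz.pow 2))).add
      ((hc₀.aeval r).mul hz)).sub (hc₀.aeval s)
  refine h.isCubicBasis.eval_derivative_ne_zero
    ((hcubic a b c d).vanishesAt_iff.1 (h.root ▸ vanishesAt_zero)) ?_
    ((hcubic _ _ _ _).vanishesAt_iff.1 hX)
  have hquad := hcubic 0 (-(3 * a)) (-(2 * b)) (-c)
  simp only [map_zero, map_neg, map_mul, map_ofNat, eval_zero, eval_neg, eval_mul,
    eval_ofNat] at hquad
  have hzero := hquad.vanishesAt_iff.1 (by convert hT using 1; rw [derivT]; ring)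
  linear_combination hzero

lemma smul_D_mem_regularAt_iff [IsPlace A] (hx : x ∈ A) (hθ : θ ∈ A)
    (hδ : derivT x θ a b c ≠ 0) (hdx : δ x ≠ 0) {w : K} :
    w • δ x ∈ regularAt A ↔ w * derivT x θ a b c ∈ A := by
  have hrel := h.derivX_smul_add_derivT_smul
  have hX : derivX x θ a b c d ∈ A := derivX_mem hx hθ
  have hT : derivT x θ a b c ∈ A := derivT_mem hx hθ
  constructor
  · intro hw
    rw [h.regularAt_eq_span_pair hx hθ, Submodule.mem_span_pair] at hw
    obtain ⟨⟨u, hu⟩, ⟨v, hv⟩, huv⟩ := hw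
    change u • δ x + v • δ θ = w • δ x at huv
    have hsmul : (w * derivT x θ a b c - (u * derivT x θ a b c - v * derivX x θ a b c d)) • δ x
        = 0 := by
      linear_combination (norm := module) (-derivT x θ a b c) • huv + v • hrel
    have hw := (smul_eq_zero.1 hsmul).resolve_right hdx
    rw [sub_eq_zero.1 hw]
    exact sub_mem (mul_mem hu hT) (mul_mem hv hX)
  · intro hw
    by_cases hvanish : VanishesAt A (derivT x θ a b c)
    · have hunit := h.not_vanishesAt_derivX hx hθ hδ hvanish
      have hX₀ := ne_zero_of_not_vanishesAt hX hunit
      have hwx : w • δ x =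
          (-(w * derivT x θ a b c * (derivX x θ a b c d)⁻¹)) • δ θ := by
        linear_combination (norm := skip) (w * (derivX x θ a b c d)⁻¹) • hrel
        match_scalars <;> field_simp <;> ring
      rw [hwx]
      exact smul_mem_of_mem (neg_mem (mul_mem hw (inv_mem_of_not_vanishesAt hX hunit)))
        (D_mem_regularAt hθ)
    · rw [← mul_inv_cancel_right₀ hδ w]
      exact smul_mem_of_mem (mul_mem hw (inv_mem_of_not_vanishesAt hT hvanish))
        (D_mem_regularAt hx)

lemma smul_D_mem_regularAt_iff_isTwistedSection (hδ : derivT x θ a b c ≠ 0) (hdx : δ x ≠ 0)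
    {w : K} : (∀ A : Subalgebra k K, IsPlace A → x ∈ A → w • δ x ∈ regularAt A) ↔
      IsTwistedSection k x θ (w * derivT x θ a b c) := by
  have hsep' : derivT x θ⁻¹ d c b ≠ 0 := by
    rw [h.derivT_inv]; exact mul_ne_zero hδ (inv_ne_zero h.ne_zero)
  have hinv {A : Subalgebra k K} [IsPlace A] (hx : x ∈ A) (hθ : θ⁻¹ ∈ A) :
      w • δ x ∈ regularAt A ↔ w * derivT x θ a b c * θ⁻¹ ∈ A := by
    rw [h.inv.smul_D_mem_regularAt_iff hx hθ hsep' hdx, h.derivT_inv, mul_assoc]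
  refine forall₃_congr fun A hA hx => ⟨fun hw => ⟨fun hθ => ?_, fun hθ => ?_⟩, fun hw => ?_⟩
  · exact (h.smul_D_mem_regularAt_iff hx hθ hδ hdx).1 hw
  · exact (hinv hx hθ).1 hw
  · rcases hA.mem_or_inv_mem θ with hθ | hθ
    · exact (h.smul_D_mem_regularAt_iff hx hθ hδ hdx).2 (hw.1 hθ)
    · exact (hinv hx hθ).2 (hw.2 hθ)

end IsCubicGenerator

end Differentials

section ScrollarGenerators

variable {k K : Type*} [Field k] [Field K] [Algebra k K] {x θ e w : K} {m n : ℕ}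
  {a b c d : k[X]}

local notation "δ" => KaehlerDifferential.D k K

lemma mem_regularDifferentials_iff {ω : Ω[K⁄k]} : ω ∈ RegularDifferentials k K ↔
    ∀ A : Subalgebra k K, IsPlace A → ω ∈ regularAt A := by
  simp only [RegularDifferentials, Set.mem_ofPred_eq, isPlace_iff, mem_regularAt_iff]

lemma mem_regularDifferentials_iff_of_charts (x : K) {ω : Ω[K⁄k]} :
    ω ∈ RegularDifferentials k K ↔
      (∀ A : Subalgebra k K, IsPlace A → x ∈ A → ω ∈ regularAt A) ∧
      (∀ A : Subalgebra k K, IsPlace A → x⁻¹ ∈ A → ω ∈ regularAt A) := by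
  rw [mem_regularDifferentials_iff]
  exact ⟨fun h => ⟨fun A hA _ => h A hA, fun A hA _ => h A hA⟩,
    fun h A hA => (hA.mem_or_inv_mem x).elim (h.1 A hA) (h.2 A hA)⟩

lemma nontrivial_of_hasGenusFive (hg : HasGenusFive k K) : Nontrivial Ω[K⁄k] := by
  by_contra hsub
  rw [not_nontrivial_iff_subsingleton] at hsub
  rw [HasGenusFive, rank_subsingleton'] at hg
  norm_num at hg

lemma D_eq_neg_sq_smul_D_inv (hx : x ≠ 0) : δ x = (-x ^ 2) • δ x⁻¹ := by
  have hsq : -x ^ 2 * -x⁻¹ ^ 2 = 1 := by field_simp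
  rw [Derivation.leibniz_inv, smul_smul, hsq, one_smul]

lemma isTwistedSection_aeval_add_mul (hθ : θ ≠ 0) (p q : k[X]) :
    IsTwistedSection k x θ (aeval x p + aeval x q * θ) := fun A _ hx => by
  have hmem (f : k[X]) : aeval x f ∈ A := aeval_mem hx f
  refine ⟨fun hθA => add_mem (hmem p) (mul_mem (hmem q) hθA), fun hθA => ?_⟩
  rw [add_mul, mul_inv_cancel_right₀ hθ]
  exact add_mem (mul_mem (hmem p) hθA) (hmem q)

lemma isTwistedSection_neg_iff : IsTwistedSection k x θ (-e) ↔ IsTwistedSection k x θ e := by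
  simp only [IsTwistedSection, neg_mul, neg_mem_iff]

/-- A cubic generator `θ` that, rescaled by `x⁻¹ ^ (n - m)`, is also a cubic generator over the
chart `x ≠ 0`: the trigonal curve lies on a scroll with invariants `m ≤ n`, as the zero locus of
the form of bidegree given by the degree bounds on `a, b, c, d`. -/
structure IsScrollarGenerator (k : Type*) {K : Type*} [Field k] [Field K] [Algebra k K]
    (x θ : K) (m n : ℕ) (a b c d : k[X]) : Prop extends IsCubicGenerator k x θ a b c d where
  one_le : 1 ≤ m
  le : m ≤ n
  natDegree_a_add_le : a.natDegree + n ≤ 2 * m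
  natDegree_b_le : b.natDegree ≤ m
  natDegree_c_le : c.natDegree ≤ n
  natDegree_d_add_le : d.natDegree + m ≤ 2 * n
  atInfinity : IsCubicGenerator k x⁻¹ (θ * x⁻¹ ^ (n - m)) (reflect (2 * m - n) a) (reflect m b)
    (reflect n c) (reflect (2 * n - m) d)

lemma IsReducedCubicBasis.isScrollarGenerator {α β : K}
    (h : IsReducedCubicBasis k x α β m n a b c d) :
    IsScrollarGenerator k x (α / aeval x a) m n a b c d := by
  have hx := h.isTrigonalMap.ne_zero
  have hle := h.natDegree_a_add_le
  have hmn := h.le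
  have hpow : x⁻¹ ^ m = x⁻¹ ^ (n - m) * x⁻¹ ^ (2 * m - n) := by rw [← pow_add]; congr 1; lia
  have hθ : α * x⁻¹ ^ m / aeval x⁻¹ (reflect (2 * m - n) a) =
      α / aeval x a * x⁻¹ ^ (n - m) := by
    rw [aeval_inv_reflect hx (by lia), hpow, div_mul_eq_mul_div, ← mul_assoc]
    exact mul_div_mul_right _ _ (pow_ne_zero _ (inv_ne_zero hx))
  exact
    { h.toIsCubicBasis.isCubicGenerator with
      one_le := h.one_le
      le := h.le
      natDegree_a_add_le := h.natDegree_a_add_le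
      natDegree_b_le := h.natDegree_b_le
      natDegree_c_le := h.natDegree_c_le
      natDegree_d_add_le := h.natDegree_d_add_le
      atInfinity := hθ ▸ h.inv.isCubicGenerator }

namespace IsCubicGenerator

variable (h : IsCubicGenerator k x θ a b c d)

include h

lemma natDegree_le_of_eq_inv {p q r P Q R : k[X]} {i j l : ℕ}
    (heq : aeval x p + aeval x q * θ + aeval x r * (aeval x a * θ ^ 2) =
      aeval x⁻¹ P * x ^ i + aeval x⁻¹ Q * x ^ j * θ +
        aeval x⁻¹ R * x ^ l * (aeval x a * θ ^ 2)) :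
    p.natDegree ≤ i ∧ q.natDegree ≤ j ∧ r.natDegree ≤ l := by
  have hx := h.isCubicBasis.isTrigonalMap.ne_zero
  set N := P.natDegree + Q.natDegree + R.natDegree
  have hreflect {f : k[X]} (hf : f.natDegree ≤ N) :
      aeval x (reflect N f) = aeval x⁻¹ f * x ^ N := by
    simpa using aeval_inv_reflect (inv_ne_zero hx) hf
  have hdegree {f F : k[X]} {s : ℕ} (hF : F.natDegree ≤ N)
      (hf : f * X ^ N - reflect N F * X ^ s = 0) : f.natDegree ≤ s := by
    rcases eq_or_ne f 0 with rfl | hf₀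
    · simp
    have hle : (f * X ^ N).natDegree ≤ N + s := by
      rw [sub_eq_zero.1 hf]
      exact natDegree_mul_le_of_le (natDegree_reflect_le.trans (by simp [hF])) (by simp)
    rw [natDegree_mul_X_pow _ hf₀] at hle
    lia
  obtain ⟨hp, hq, hr⟩ := h.eq_zero (p * X ^ N - reflect N P * X ^ i)
    (q * X ^ N - reflect N Q * X ^ j) ((r * X ^ N - reflect N R * X ^ l) * a) (by
      simp only [map_sub, map_mul, map_pow, aeval_X, hreflect (f := P) (by lia),
        hreflect (f := Q) (by lia), hreflect (f := R) (by lia)]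
      linear_combination x ^ N * heq)
  exact ⟨hdegree (by lia) hp, hdegree (by lia) hq,
    hdegree (by lia) ((mul_eq_zero.1 hr).resolve_right h.isCubicBasis.leading_ne_zero)⟩

end IsCubicGenerator

lemma natDegree_mul_X_sq_le_iff {p : k[X]} (hn : 1 ≤ n) :
    (p * X ^ 2).natDegree ≤ n ↔ p ∈ degreeLT k (n - 1) := by
  rcases eq_or_ne p 0 with rfl | hp
  · simp
  · rw [natDegree_mul_X_pow _ hp, mem_degreeLT, ← natDegree_lt_iff_degree_lt hp]
    lia

lemma exists_aeval_inv_eq_of_mem_degreeLT (hx : x ≠ 0) {p : k[X]} (hp : p ∈ degreeLT k (n - 1)) :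
    ∃ P : k[X], aeval x⁻¹ P = aeval x p * (x ^ 2 * x⁻¹ ^ n) := by
  have hle : p = 0 ∨ p.natDegree + 2 ≤ n := by
    rw [or_iff_not_imp_left]
    intro hp₀
    rw [mem_degreeLT, ← natDegree_lt_iff_degree_lt hp₀] at hp
    lia
  obtain ⟨P, hP⟩ := exists_aeval_inv_mul_inv_pow hx hle
  exact ⟨P, by linear_combination x ^ 2 * hP - aeval x⁻¹ P * pow_mul_inv_pow_self hx 2⟩

namespace IsScrollarGenerator

variable (h : IsScrollarGenerator k x θ m n a b c d)

include h

lemma derivT_atInfinity : derivT x⁻¹ (θ * x⁻¹ ^ (n - m)) (reflect (2 * m - n) a) (reflect m b)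
    (reflect n c) = derivT x θ a b c * x⁻¹ ^ n := by
  have hx := h.isCubicBasis.isTrigonalMap.ne_zero
  have ha := h.natDegree_a_add_le
  have hmn := h.le
  have hpow₂ : x⁻¹ ^ (2 * m - n) * (x⁻¹ ^ (n - m)) ^ 2 = x⁻¹ ^ n := by
    rw [← pow_mul, ← pow_add]; congr 1; lia
  have hpow₁ : x⁻¹ ^ m * x⁻¹ ^ (n - m) = x⁻¹ ^ n := by
    rw [← pow_add]; congr 1; lia
  rw [derivT, derivT, aeval_inv_reflect hx (p := a) (by lia), aeval_inv_reflect hx h.natDegree_b_le,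
    aeval_inv_reflect hx h.natDegree_c_le]
  linear_combination (3 * aeval x a * θ ^ 2) * hpow₂ - (2 * aeval x b * θ) * hpow₁

lemma exists_eq_of_isTwistedSection_inv [IsAlgClosed k]
    (he : IsTwistedSection k x⁻¹ (θ * x⁻¹ ^ (n - m)) (e * (x ^ 2 * x⁻¹ ^ n))) :
    ∃ P Q R : k[X], e * x ^ 2 = aeval x⁻¹ P * x ^ n + aeval x⁻¹ Q * x ^ m * θ +
      aeval x⁻¹ R * x ^ 0 * (aeval x a * θ ^ 2) := by
  have hx := h.isCubicBasis.isTrigonalMap.ne_zero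
  have ha := h.natDegree_a_add_le
  have hmn := h.le
  obtain ⟨P, Q, R, hPQR⟩ := h.atInfinity.exists_eq_of_isTwistedSection he
  rw [aeval_inv_reflect hx (p := a) (by lia)] at hPQR
  have hpow₂ : x⁻¹ ^ (2 * m - n) * (x⁻¹ ^ (n - m)) ^ 2 = x⁻¹ ^ n := by
    rw [← pow_mul, ← pow_add]; congr 1; lia
  have hpow₁ : x⁻¹ ^ (n - m) = x ^ m * x⁻¹ ^ n := by
    rw [← pow_sub_mul_inv_pow hx (Nat.sub_le n m), Nat.sub_sub_self hmn]
  refine ⟨P, Q, R, mul_right_cancel₀ (pow_ne_zero n (inv_ne_zero hx)) ?_⟩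
  linear_combination hPQR + aeval x⁻¹ Q * θ * hpow₁ -
    aeval x⁻¹ P * pow_mul_inv_pow_self hx n + aeval x⁻¹ R * aeval x a * θ ^ 2 * hpow₂

lemma isTwistedSection_iff_mem_degreeLT [IsAlgClosed k] :
    IsTwistedSection k x θ e ∧
      IsTwistedSection k x⁻¹ (θ * x⁻¹ ^ (n - m)) (e * (x ^ 2 * x⁻¹ ^ n)) ↔
    ∃ p ∈ degreeLT k (n - 1), ∃ q ∈ degreeLT k (m - 1), aeval x p + aeval x q * θ = e := by
  have hx := h.isCubicBasis.isTrigonalMap.ne_zero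
  have hm := h.one_le
  have hmn := h.le
  constructor
  · rintro ⟨hfinite, hinfinite⟩
    obtain ⟨p, q, r, hpqr⟩ := h.exists_eq_of_isTwistedSection hfinite
    obtain ⟨P, Q, R, hPQR⟩ := h.exists_eq_of_isTwistedSection_inv hinfinite
    obtain ⟨hp, hq, hr⟩ := h.natDegree_le_of_eq_inv (p := p * X ^ 2) (q := q * X ^ 2)
      (r := r * X ^ 2) (P := P) (Q := Q) (R := R) (i := n) (j := m) (l := 0) (by
        rw [← hPQR, hpqr]
        simp only [map_mul, map_pow, aeval_X]
        ring)
    obtain rfl : r = 0 := by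
      by_contra hr₀
      rw [natDegree_mul_X_pow _ hr₀] at hr
      lia
    exact ⟨p, (natDegree_mul_X_sq_le_iff (hm.trans hmn)).1 hp, q,
      (natDegree_mul_X_sq_le_iff hm).1 hq, by simp [hpqr]⟩
  · rintro ⟨p, hp, q, hq, rfl⟩
    obtain ⟨P, hP⟩ := exists_aeval_inv_eq_of_mem_degreeLT hx hp
    obtain ⟨Q, hQ⟩ := exists_aeval_inv_eq_of_mem_degreeLT hx hq
    refine ⟨isTwistedSection_aeval_add_mul h.ne_zero p q, ?_⟩
    have hpow : x⁻¹ ^ n = x⁻¹ ^ m * x⁻¹ ^ (n - m) := by rw [← pow_add]; congr 1; lia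
    convert isTwistedSection_aeval_add_mul h.atInfinity.ne_zero P Q using 1
    rw [hP, hQ]
    linear_combination aeval x q * θ * x ^ 2 * hpow

lemma smul_D_mem_regularDifferentials_iff [IsAlgClosed k] (hsep : derivT x θ a b c ≠ 0)
    (hdx : δ x ≠ 0) : w • δ x ∈ RegularDifferentials k K ↔
      ∃ p ∈ degreeLT k (n - 1), ∃ q ∈ degreeLT k (m - 1),
        aeval x p + aeval x q * θ = w * derivT x θ a b c := by
  have hx := h.isCubicBasis.isTrigonalMap.ne_zero
  have hdx' : δ x⁻¹ ≠ 0 := fun h₀ => hdx (by rw [D_eq_neg_sq_smul_D_inv hx, h₀, smul_zero])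
  have hwdx : w • δ x = (w * -x ^ 2) • δ x⁻¹ := by rw [D_eq_neg_sq_smul_D_inv hx, smul_smul]
  rw [mem_regularDifferentials_iff_of_charts x,
    h.smul_D_mem_regularAt_iff_isTwistedSection hsep hdx, hwdx,
    h.atInfinity.smul_D_mem_regularAt_iff_isTwistedSection
      (by rw [h.derivT_atInfinity]; exact mul_ne_zero hsep (pow_ne_zero _ (inv_ne_zero hx))) hdx',
    h.derivT_atInfinity, ← isTwistedSection_neg_iff (x := x⁻¹),
    ← h.isTwistedSection_iff_mem_degreeLT]
  congr! 2
  ring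

end IsScrollarGenerator

end ScrollarGenerators

section GenusFive

variable {k K : Type*} [Field k] [IsAlgClosed k] [Field K] [Algebra k K] {x θ w : K} {m n : ℕ}
  {a b c d : k[X]}

local notation "δ" => KaehlerDifferential.D k K

namespace IsCubicGenerator

variable (h : IsCubicGenerator k x θ a b c d)

include h

lemma exists_smul_D_eq (hsep : derivT x θ a b c ≠ 0) (ω : Ω[K⁄k]) : ∃ w : K, w • δ x = ω := by
  obtain ⟨u, v, rfl⟩ := Submodule.mem_span_pair.1
    (h.span_D_pair_eq_top ▸ Submodule.mem_top (x := ω))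
  refine ⟨u - v * (derivX x θ a b c d / derivT x θ a b c), ?_⟩
  linear_combination (norm := skip)
    (-(v * (derivT x θ a b c)⁻¹)) • h.derivX_smul_add_derivT_smul
  match_scalars <;> field_simp <;> ring

-- If `derivT` vanishes, then `3 = 0` and the cubic is `a T ^ 3 - d`; were `derivX` zero as well,
-- `a' d = a d'` would make the curve singular over every point with `a ≠ 0`.
lemma derivX_ne_zero (hins : derivT x θ a b c = 0) : derivX x θ a b c d ≠ 0 := fun hX => by
  obtain ⟨rfl, hb, ha⟩ := h.eq_zero c (-2 * b) (3 * a) (by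
    rw [← hins, derivT]
    simp only [map_mul, map_neg, map_ofNat]
    ring)
  have hthree : (3 : k[X]) = 0 := (mul_eq_zero.1 ha).resolve_right h.isCubicBasis.leading_ne_zero
  obtain rfl : b = 0 := by linear_combination hb + b * hthree
  have hwronskian : derivative a * d - a * derivative d = 0 := by
    by_contra hne
    refine h.isCubicBasis.isTrigonalMap.aeval_ne_zero hne ?_
    have hroot := h.root
    simp only [derivX, map_zero, zero_mul, sub_zero, add_zero] at hX hroot
    simp only [map_sub, map_mul]
    linear_combination aeval x a * hX - aeval x (derivative a) * hroot
  obtain ⟨c₀, hc₀⟩ : ∃ c₀, a.eval c₀ ≠ 0 := by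
    contrapose! h
    exact fun h => h.isCubicBasis.leading_ne_zero (Polynomial.funext fun r => by simp [*])
  obtain ⟨z, hz⟩ := IsAlgClosed.exists_pow_nat_eq (d.eval c₀ / a.eval c₀) (n := 3) (by norm_num)
  rw [eq_div_iff hc₀] at hz
  have hwronskian₀ := congrArg (eval c₀) hwronskian
  have hthree₀ : (3 : k) = 0 := by simpa using congrArg (eval 0) hthree
  refine h.isCubicBasis.eval_derivative_ne_zero (c₀ := c₀) (z := z) ?_ ?_ ?_
  · simp only [eval_zero]
    linear_combination hz
  · simp [hthree₀]
  · simp only [eval_sub, eval_mul, eval_zero] at hwronskian₀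
    simp only [derivative_zero, eval_zero, zero_mul, sub_zero, add_zero]
    apply mul_left_cancel₀ hc₀
    linear_combination hwronskian₀ + eval c₀ (derivative a) * hz

lemma mem_affineRing_of_smul_D_mem (hdx : δ x = 0) (hdθ : δ θ ≠ 0)
    (hw : ∀ A : Subalgebra k K, IsPlace A → x ∈ A → w • δ θ ∈ regularAt A) :
    w ∈ affineRing k x := by
  refine mem_affineRing_iff.2 fun A hA hx => ?_
  have hwA := hw A hA hx
  have hcancel {u v : K} (huv : v • δ θ = u • δ θ) : u = v :=
    (smul_left_injective K hdθ huv).symm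
  rcases hA.mem_or_inv_mem θ with hθ | hθ
  · rw [h.regularAt_eq_span_pair hx hθ, Submodule.mem_span_pair, hdx] at hwA
    obtain ⟨u, v, huv⟩ := hwA
    rw [smul_zero, zero_add] at huv
    exact hcancel huv ▸ v.2
  · rw [h.inv.regularAt_eq_span_pair hx hθ, Submodule.mem_span_pair, hdx,
      Derivation.leibniz_inv] at hwA
    obtain ⟨u, v, huv⟩ := hwA
    rw [smul_zero, zero_add] at huv
    have hvw : ((v : K) * -θ⁻¹ ^ 2) • δ θ = w • δ θ := by rw [← huv, mul_smul]; rfl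
    exact hcancel hvw ▸ mul_mem v.2 (neg_mem (pow_mem hθ 2))

end IsCubicGenerator

/-- The differential `(p(x) + q(x) θ) / derivT • dx` attached to a pair of polynomials. -/
def sectionDifferential (x θ : K) (a b c : k[X]) : k[X] × k[X] →ₗ[k] Ω[K⁄k] :=
  (LinearMap.toSpanSingleton K _ ((derivT x θ a b c)⁻¹ • δ x)).restrictScalars k ∘ₗ
    (aeval x).toLinearMap.coprod (LinearMap.mulRight k θ ∘ₗ (aeval x).toLinearMap)

omit [IsAlgClosed k] in
lemma sectionDifferential_apply (p q : k[X]) : sectionDifferential x θ a b c (p, q) =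
    ((aeval x p + aeval x q * θ) / derivT x θ a b c) • δ x := by
  simp [sectionDifferential, div_eq_mul_inv, mul_smul]

namespace IsScrollarGenerator

variable (h : IsScrollarGenerator k x θ m n a b c d)

include h

lemma regularDifferentials_eq_range (hsep : derivT x θ a b c ≠ 0) (hdx : δ x ≠ 0) :
    RegularDifferentials k K = (LinearMap.range (sectionDifferential x θ a b c ∘ₗ
      (degreeLT k (n - 1)).subtype.prodMap (degreeLT k (m - 1)).subtype) : Set Ω[K⁄k]) := by
  ext ω
  obtain ⟨w, rfl⟩ := h.exists_smul_D_eq hsep ω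
  rw [h.smul_D_mem_regularDifferentials_iff hsep hdx]
  simp only [LinearMap.coe_range, Set.mem_range, Prod.exists, LinearMap.comp_apply,
    LinearMap.prodMap_apply, Submodule.subtype_apply, Subtype.exists,
    sectionDifferential_apply, (smul_left_injective K hdx).eq_iff, div_eq_iff hsep]
  grind

omit [IsAlgClosed k] in
lemma sectionDifferential_injective (hsep : derivT x θ a b c ≠ 0) (hdx : δ x ≠ 0) :
    Function.Injective (sectionDifferential x θ a b c) := by
  rw [← LinearMap.ker_eq_bot, LinearMap.ker_eq_bot']
  rintro ⟨p, q⟩ hpq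
  rw [sectionDifferential_apply, smul_eq_zero_iff_left hdx, div_eq_zero_iff,
    or_iff_left hsep] at hpq
  obtain ⟨rfl, rfl, -⟩ := h.eq_zero p q 0 (by simpa using hpq)
  rfl

lemma finrank_regularDifferentials [Nontrivial Ω[K⁄k]] (hsep : derivT x θ a b c ≠ 0) :
    Module.finrank k (Submodule.span k (RegularDifferentials k K)) = n - 1 + (m - 1) := by
  have hdx : δ x ≠ 0 := fun hdx => by
    obtain ⟨ω, hω⟩ := exists_ne (0 : Ω[K⁄k])
    obtain ⟨w, rfl⟩ := h.exists_smul_D_eq hsep ω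
    exact hω (by rw [hdx, smul_zero])
  have hinj : Function.Injective (sectionDifferential x θ a b c ∘ₗ
      (degreeLT k (n - 1)).subtype.prodMap (degreeLT k (m - 1)).subtype) :=
    (h.sectionDifferential_injective hsep hdx).comp
      (Subtype.val_injective.prodMap Subtype.val_injective)
  rw [h.regularDifferentials_eq_range hsep hdx, Submodule.span_eq,
    LinearMap.finrank_range_of_inj hinj,
    ((degreeLTEquiv k (n - 1)).prodCongr (degreeLTEquiv k (m - 1))).finrank_eq]
  simp

lemma regularDifferentials_subset_span (hins : derivT x θ a b c = 0) :
    RegularDifferentials k K ⊆ Submodule.span k {δ θ} := by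
  have hx := h.isCubicBasis.isTrigonalMap.ne_zero
  have hdx : δ x = 0 := by
    have hrel := h.derivX_smul_add_derivT_smul
    rw [hins, zero_smul, add_zero] at hrel
    exact (smul_eq_zero.1 hrel).resolve_left (h.derivX_ne_zero hins)
  have hdx' : δ x⁻¹ = 0 := by rw [Derivation.leibniz_inv, hdx, smul_zero]
  intro ω hω
  obtain ⟨u, w, rfl⟩ := Submodule.mem_span_pair.1
    (h.span_D_pair_eq_top ▸ Submodule.mem_top (x := ω))
  rw [hdx, smul_zero, zero_add] at hω ⊢
  rcases eq_or_ne (δ θ) 0 with hdθ | hdθ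
  · rw [hdθ, smul_zero]; exact zero_mem _
  have hdθ' : δ (θ * x⁻¹ ^ (n - m)) = x⁻¹ ^ (n - m) • δ θ := by
    rw [Derivation.leibniz, Derivation.leibniz_pow, hdx']; simp
  have hwθ : (w * x ^ (n - m)) • δ (θ * x⁻¹ ^ (n - m)) = w • δ θ := by
    rw [hdθ', smul_smul, mul_assoc, pow_mul_inv_pow_self hx, mul_one]
  rw [mem_regularDifferentials_iff] at hω
  have hw : w ∈ affineRing k x := h.mem_affineRing_of_smul_D_mem hdx hdθ fun A hA _ => hω A hA
  have hw' : w * x ^ (n - m) ∈ affineRing k x⁻¹ :=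
    h.atInfinity.mem_affineRing_of_smul_D_mem hdx'
      (by rw [hdθ']; exact smul_ne_zero (pow_ne_zero _ (inv_ne_zero hx)) hdθ)
      fun A hA _ => hwθ ▸ hω A hA
  obtain ⟨r, rfl⟩ := exists_algebraMap_eq_of_mem_affineRing_inv hw (by
    have hmem := mul_mem hw' (pow_mem (self_mem_affineRing x⁻¹) (n - m))
    rwa [mul_assoc, pow_mul_inv_pow_self hx, mul_one] at hmem)
  rw [algebraMap_smul]
  exact Submodule.smul_mem _ _ (Submodule.mem_span_singleton_self _)

lemma derivT_ne_zero (hg : HasGenusFive k K) : derivT x θ a b c ≠ 0 := fun hins => by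
  have hle := Submodule.rank_mono (Submodule.span_le.2 (h.regularDifferentials_subset_span hins))
  have hone := hg ▸ hle.trans (rank_span_le _)
  rw [Cardinal.mk_singleton] at hone
  norm_num at hone

lemma eq_three_and_eq_four (hg : HasGenusFive k K) : m = 3 ∧ n = 4 := by
  have := nontrivial_of_hasGenusFive hg
  have hfinrank := h.finrank_regularDifferentials (h.derivT_ne_zero hg)
  rw [Module.finrank, hg, Cardinal.toNat_ofNat] at hfinrank
  have := h.one_le
  have := h.le
  have := h.natDegree_a_add_le
  lia

end IsScrollarGenerator

lemma exists_isScrollarGenerator (ht : Trigonal k K) (hg : HasGenusFive k K) :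
    ∃ (x θ : K) (a b c d : k[X]), IsScrollarGenerator k x θ 3 4 a b c d := by
  obtain ⟨x, hx, hfinrank⟩ := ht
  obtain ⟨α, β, m, n, a, b, c, d, h⟩ :=
    IsTrigonalMap.exists_isReducedCubicBasis ⟨hx, hfinrank⟩
  obtain ⟨rfl, rfl⟩ := h.isScrollarGenerator.eq_three_and_eq_four hg
  exact ⟨x, _, a, b, c, d, h.isScrollarGenerator⟩

end GenusFive

section BinaryForms

section Forms

variable {σ k R A : Type*} [Field k] [CommRing R] [CommRing A] [Algebra R A] {n : ℕ}

lemma aeval_smul_of_isHomogeneous {F : MvPolynomial σ R} (hF : F.IsHomogeneous n) (t : A)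
    (g : σ → A) : MvPolynomial.aeval (t • g) F = t ^ n * MvPolynomial.aeval g F := by
  simp only [MvPolynomial.aeval_def, MvPolynomial.eval₂_eq, Finset.mul_sum]
  refine Finset.sum_congr rfl fun u hu => ?_
  simp only [Pi.smul_apply, smul_eq_mul, mul_pow, Finset.prod_mul_distrib,
    Finset.prod_pow_eq_pow_sum]
  rw [← hF.degree_eq_sum_deg_support hu]
  ring

lemma eq_of_eval_eq_of_apply_eq_one [Infinite k] {F G : MvPolynomial σ k} (i : σ)
    (hF : F.IsHomogeneous n) (hG : G.IsHomogeneous n)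
    (h : ∀ P : σ → k, P i = 1 → MvPolynomial.eval P F = MvPolynomial.eval P G) : F = G := by
  refine mul_left_cancel₀ (MvPolynomial.X_ne_zero i) (MvPolynomial.funext fun P => ?_)
  rw [map_mul, map_mul, MvPolynomial.eval_X]
  rcases eq_or_ne (P i) 0 with hP | hP
  · rw [hP, zero_mul, zero_mul]
  · have hchart := h ((P i)⁻¹ • P) (inv_mul_cancel₀ hP)
    simp only [← MvPolynomial.coe_aeval_eq_eval, RingHom.coe_coe] at hchart ⊢
    rw [aeval_smul_of_isHomogeneous hF, aeval_smul_of_isHomogeneous hG] at hchart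
    rw [mul_left_cancel₀ (pow_ne_zero n (inv_ne_zero hP)) hchart]

-- The homogeneous components of `H` are the coefficients of `H (t X)`, seen as a polynomial in
-- `t`; for a form this polynomial is a monomial, hence so are all its divisors.
lemma exists_isHomogeneous_of_dvd [IsDomain R] {F G : MvPolynomial σ R} (hF : F.IsHomogeneous n)
    (hF₀ : F ≠ 0) (hGF : G ∣ F) : ∃ m, G.IsHomogeneous m := by
  let ψ : MvPolynomial σ R →ₐ[R] (MvPolynomial σ R)[X] :=
    MvPolynomial.aeval ((X : (MvPolynomial σ R)[X]) • fun i => C (MvPolynomial.X i))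
  have hψ {H : MvPolynomial σ R} {m : ℕ} (hH : H.IsHomogeneous m) : ψ H = monomial m H := by
    have hC : MvPolynomial.aeval (fun i => (C (MvPolynomial.X i) : (MvPolynomial σ R)[X])) =
        (CAlgHom : MvPolynomial σ R →ₐ[MvPolynomial σ R] (MvPolynomial σ R)[X]).restrictScalars R :=
      MvPolynomial.algHom_ext fun i => by simp
    rw [aeval_smul_of_isHomogeneous hH, hC, ← C_mul_X_pow_eq_monomial, mul_comm]
    rfl
  have hcoeff (H : MvPolynomial σ R) (m : ℕ) :
      (ψ H).coeff m = MvPolynomial.homogeneousComponent m H := by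
    conv_lhs => rw [← H.sum_homogeneousComponent, map_sum, finsetSum_coeff]
    simp only [hψ (MvPolynomial.homogeneousComponent_isHomogeneous _ H), coeff_monomial]
    simpa using fun hm => (H.homogeneousComponent_eq_zero m (by lia)).symm
  obtain ⟨H, rfl⟩ := hGF
  have hprod : ψ G * ψ H = monomial n (G * H) := by rw [← map_mul, hψ hF]
  have hG : ψ G ≠ 0 := left_ne_zero_of_mul (b := ψ H) (by simpa [hprod] using hF₀)
  have hH : ψ H ≠ 0 := right_ne_zero_of_mul (a := ψ G) (by simpa [hprod] using hF₀)
  have hdeg := congrArg natDegree hprod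
  have htrailing := congrArg natTrailingDegree hprod
  rw [natDegree_mul hG hH, natDegree_monomial_eq _ hF₀] at hdeg
  rw [natTrailingDegree_mul hG hH, natTrailingDegree_monomial hF₀] at htrailing
  refine ⟨(ψ G).natDegree, fun u hu => ?_⟩
  have hne : (ψ G).coeff u.degree ≠ 0 := fun h₀ => hu (by
    rw [hcoeff] at h₀
    simpa [MvPolynomial.coeff_homogeneousComponent] using congrArg (MvPolynomial.coeff u) h₀)
  have := le_natDegree_of_ne_zero hne
  have := natTrailingDegree_le_of_ne_zero hne
  have := (ψ H).natTrailingDegree_le_natDegree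
  rw [Pi.one_def, ← Finsupp.degree_eq_weight_one]
  lia

end Forms

end BinaryForms

section PlaneQuintics

lemma natDegree_reflect_le_of_le {R : Type*} [Semiring R] {p : R[X]} {n : ℕ}
    (hp : p.natDegree ≤ n) : (reflect n p).natDegree ≤ n :=
  natDegree_reflect_le.trans (max_le le_rfl hp)

variable {k : Type*}

section Homogenize

variable [CommRing k]

lemma pderiv_zero_homogenize (p : k[X]) (n : ℕ) :
    MvPolynomial.pderiv 0 (p.homogenize (n + 1)) = (derivative p).homogenize n := by
  induction p using Polynomial.induction_on' with
  | add p q hp hq => simp [hp, hq]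
  | monomial i r =>
    rcases i with - | i
    · simp [MvPolynomial.pderiv_X]
    · rw [derivative_monomial, Nat.add_sub_cancel]
      rcases le_or_gt i n with hi | hi
      · rw [← C_mul_X_pow_eq_monomial, ← C_mul_X_pow_eq_monomial]
        rw [homogenize_C_mul, homogenize_C_mul, homogenize_X_pow (Nat.succ_le_succ hi),
          homogenize_X_pow hi]
        simp [MvPolynomial.pderiv_X]
        ring
      · rw [homogenize_monomial_of_lt hi, homogenize_monomial_of_lt (by lia), map_zero]

lemma rename_swap_homogenize (p : k[X]) (n : ℕ) :
    MvPolynomial.rename (Equiv.swap 0 1) (p.homogenize n) = (reflect n p).homogenize n := by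
  induction p using Polynomial.induction_on' with
  | add p q hp hq => simp [hp, hq]
  | monomial i r =>
    rw [← C_mul_X_pow_eq_monomial, reflect_C_mul_X_pow]
    rcases le_or_gt i n with hi | hi
    · rw [revAt_le hi, homogenize_C_mul, homogenize_C_mul, homogenize_X_pow hi,
        homogenize_X_pow (Nat.sub_le n i), Nat.sub_sub_self hi]
      simp [mul_comm]
    · rw [revAt_eq_self_of_lt hi, C_mul_X_pow_eq_monomial, homogenize_monomial_of_lt hi, map_zero]

end Homogenize

/-- The plane quintic `A Z ^ 3 - B Z ^ 2 + C Z - D`, where `A, B, C, D` are the binary forms of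
degrees `2, 3, 4, 5` in the first two coordinates with dehomogenizations `a, b, c, d`. -/
def quintic [CommRing k] (a b c d : k[X]) : MvPolynomial (Fin 3) k :=
  MvPolynomial.rename Fin.castSucc (a.homogenize 2) * MvPolynomial.X 2 ^ 3 -
    MvPolynomial.rename Fin.castSucc (b.homogenize 3) * MvPolynomial.X 2 ^ 2 +
    MvPolynomial.rename Fin.castSucc (c.homogenize 4) * MvPolynomial.X 2 -
    MvPolynomial.rename Fin.castSucc (d.homogenize 5)

section Quintic

variable [CommRing k] {A : Type*} [CommRing A] [Algebra k A] {a b c d : k[X]}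

lemma isHomogeneous_quintic (a b c d : k[X]) : (quintic a b c d).IsHomogeneous 5 := by
  have hform (p : k[X]) (i j : ℕ) :
      (MvPolynomial.rename Fin.castSucc (p.homogenize i) * MvPolynomial.X 2 ^ j :
        MvPolynomial (Fin 3) k).IsHomogeneous (i + j) :=
    (isHomogeneous_homogenize p).rename_isHomogeneous.mul (MvPolynomial.isHomogeneous_X_pow 2 j)
  simpa [quintic] using (((hform a 2 3).sub (hform b 3 2)).add (hform c 4 1)).sub (hform d 5 0)

lemma aeval_quintic (g : Fin 3 → A) : MvPolynomial.aeval g (quintic a b c d) =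
    MvPolynomial.aeval (g ∘ Fin.castSucc) (a.homogenize 2) * g 2 ^ 3 -
      MvPolynomial.aeval (g ∘ Fin.castSucc) (b.homogenize 3) * g 2 ^ 2 +
      MvPolynomial.aeval (g ∘ Fin.castSucc) (c.homogenize 4) * g 2 -
      MvPolynomial.aeval (g ∘ Fin.castSucc) (d.homogenize 5) := by
  simp [quintic, MvPolynomial.aeval_rename]

lemma dehomZ_quintic : dehomZ k (quintic a b c d) =
    a.homogenize 2 - b.homogenize 3 + c.homogenize 4 - d.homogenize 5 := by
  have hX : (fun i : Fin 3 => if i = 0 then MvPolynomial.X 0 else if i = 1 then MvPolynomial.X 1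
      else (1 : MvPolynomial (Fin 2) k)) ∘ Fin.castSucc = MvPolynomial.X := by
    ext i : 1; fin_cases i <;> rfl
  rw [dehomZ, aeval_quintic, hX]
  simp

lemma homogeneousComponent_two_dehomZ_quintic :
    MvPolynomial.homogeneousComponent 2 (dehomZ k (quintic a b c d)) = a.homogenize 2 := by
  simp [dehomZ_quintic, MvPolynomial.homogeneousComponent_of_mem (isHomogeneous_homogenize _)]

lemma homogeneousComponent_three_dehomZ_quintic :
    MvPolynomial.homogeneousComponent 3 (dehomZ k (quintic a b c d)) = -b.homogenize 3 := by
  simp [dehomZ_quintic, MvPolynomial.homogeneousComponent_of_mem (isHomogeneous_homogenize _)]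

lemma rename_swap_quintic (a b c d : k[X]) :
    MvPolynomial.rename (Equiv.swap 0 1) (quintic a b c d) =
      quintic (reflect 2 a) (reflect 3 b) (reflect 4 c) (reflect 5 d) := by
  have hswap : (Equiv.swap 0 1 : Fin 3 → Fin 3) ∘ Fin.castSucc =
      Fin.castSucc ∘ (Equiv.swap 0 1 : Fin 2 → Fin 2) := by decide
  have htwo : Equiv.swap (0 : Fin 3) 1 2 = 2 := by decide
  simp only [quintic, map_sub, map_add, map_mul, map_pow, MvPolynomial.rename_X,
    MvPolynomial.rename_rename, hswap, htwo, ← rename_swap_homogenize]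

lemma pderiv_zero_quintic (a b c d : k[X]) : MvPolynomial.pderiv 0 (quintic a b c d) =
    MvPolynomial.rename Fin.castSucc ((derivative a).homogenize 1) * MvPolynomial.X 2 ^ 3 -
      MvPolynomial.rename Fin.castSucc ((derivative b).homogenize 2) * MvPolynomial.X 2 ^ 2 +
      MvPolynomial.rename Fin.castSucc ((derivative c).homogenize 3) * MvPolynomial.X 2 -
      MvPolynomial.rename Fin.castSucc ((derivative d).homogenize 4) := by
  have hrename (p : k[X]) (n : ℕ) :
      MvPolynomial.pderiv 0 (MvPolynomial.rename (Fin.castSucc (n := 2)) (p.homogenize (n + 1))) =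
        MvPolynomial.rename Fin.castSucc ((derivative p).homogenize n) := by
    rw [← pderiv_zero_homogenize, ← MvPolynomial.pderiv_rename (Fin.castSucc_injective 2),
      Fin.castSucc_zero]
  simp [quintic, MvPolynomial.pderiv_X, hrename, mul_comm]

lemma pderiv_two_quintic (a b c d : k[X]) : MvPolynomial.pderiv 2 (quintic a b c d) =
    3 * MvPolynomial.rename Fin.castSucc (a.homogenize 2) * MvPolynomial.X 2 ^ 2 -
      2 * MvPolynomial.rename Fin.castSucc (b.homogenize 3) * MvPolynomial.X 2 +
      MvPolynomial.rename Fin.castSucc (c.homogenize 4) := by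
  have hrename (G : MvPolynomial (Fin 2) k) :
      MvPolynomial.pderiv 2 (MvPolynomial.rename (Fin.castSucc (n := 2)) G) = 0 := by
    refine MvPolynomial.pderiv_eq_zero_of_notMem_vars fun hmem => ?_
    obtain ⟨i, -, hi⟩ := MvPolynomial.mem_vars_rename _ _ hmem
    exact i.castSucc_ne_last hi
  simp only [quintic, map_sub, map_add, MvPolynomial.pderiv_mul, MvPolynomial.pderiv_pow, hrename,
    MvPolynomial.pderiv_X_self]
  ring

lemma isSingAt_quintic_origin (a b c d : k[X]) : IsSingAt k (quintic a b c d) ![0, 0, 1] := by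
  have hzero {G : MvPolynomial (Fin 2) k} {n : ℕ} (hG : G.IsHomogeneous (n + 1)) :
      MvPolynomial.eval ((![0, 0, 1] : Fin 3 → k) ∘ Fin.castSucc) G = 0 := by
    have hvec : (![0, 0, 1] : Fin 3 → k) ∘ Fin.castSucc = 0 := by ext i; fin_cases i <;> rfl
    rw [hvec, MvPolynomial.eval_zero]
    exact hG.coeff_eq_zero (by simp)
  have hform (p : k[X]) (n : ℕ) : (p.homogenize (n + 1)).IsHomogeneous (n + 1) :=
    isHomogeneous_homogenize p
  have hderiv (p : k[X]) (n : ℕ) (i : Fin 2) :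
      (MvPolynomial.pderiv i (p.homogenize (n + 2))).IsHomogeneous (n + 1) :=
    (isHomogeneous_homogenize p).pderiv
  refine ⟨by simp [quintic, MvPolynomial.eval_rename, hzero (hform _ _)], fun i => ?_⟩
  induction i using Fin.lastCases with
  | last =>
    rw [show Fin.last 2 = 2 from rfl, pderiv_two_quintic]
    simp [MvPolynomial.eval_rename, hzero (hform _ _)]
  | cast i =>
    simp [quintic, MvPolynomial.pderiv_rename, Fin.castSucc_injective, MvPolynomial.eval_rename,
      hzero (hform _ _), hzero (hderiv _ _ _)]

lemma isSingAt_rename {F : MvPolynomial (Fin 3) k} {P : Fin 3 → k} (hP : IsSingAt k F P)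
    (e : Equiv.Perm (Fin 3)) : IsSingAt k (MvPolynomial.rename e F) (P ∘ e.symm) := by
  have heval (G : MvPolynomial (Fin 3) k) :
      MvPolynomial.eval (P ∘ e.symm) (MvPolynomial.rename e G) = MvPolynomial.eval P G := by
    rw [MvPolynomial.eval_rename, Function.comp_assoc, e.symm_comp_self, Function.comp_id]
  refine ⟨(heval F).trans hP.1, fun i => ?_⟩
  rw [← e.apply_symm_apply i, MvPolynomial.pderiv_rename e.injective, heval]
  exact hP.2 _

end Quintic

section Trigonal

variable {K : Type*} [Field k] [Field K] [Algebra k K] {x α β θ : K} {a b c d : k[X]}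

lemma IsCubicBasis.not_isSingAt_quintic (h : IsCubicBasis k x α β a b c d) (ha : a.natDegree ≤ 2)
    (hb : b.natDegree ≤ 3) (hc : c.natDegree ≤ 4) (hd : d.natDegree ≤ 5) {P : Fin 3 → k}
    (hP : P 1 ≠ 0) : ¬ IsSingAt k (quintic a b c d) P := fun hsing => by
  have heval {p : k[X]} {n : ℕ} (hp : p.natDegree ≤ n) :
      MvPolynomial.eval (P ∘ Fin.castSucc) (p.homogenize n) = p.eval (P 0 / P 1) * P 1 ^ n :=
    eval_homogenize hp _ hP
  have hderiv {p : k[X]} {n : ℕ} (hp : p.natDegree ≤ n + 1) : p.derivative.natDegree ≤ n :=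
    (natDegree_derivative_le p).trans (by lia)
  obtain ⟨z, hz⟩ : ∃ z, P 2 = z * P 1 := ⟨P 2 / P 1, (div_mul_cancel₀ _ hP).symm⟩
  have hroot := hsing.1
  have hderiv₀ := hsing.2 0
  have hderiv₂ := hsing.2 2
  rw [pderiv_zero_quintic] at hderiv₀
  rw [pderiv_two_quintic] at hderiv₂
  simp only [quintic, map_sub, map_add, map_mul, map_pow, map_ofNat, MvPolynomial.eval_X,
    MvPolynomial.eval_rename, heval, ha, hb, hc, hd, hderiv, hz] at hroot hderiv₀ hderiv₂
  refine h.eval_derivative_ne_zero (c₀ := P 0 / P 1) (z := z)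
    (mul_right_cancel₀ (pow_ne_zero 5 hP) ?_) (mul_right_cancel₀ (pow_ne_zero 4 hP) ?_)
    (mul_right_cancel₀ (pow_ne_zero 4 hP) ?_)
  · linear_combination hroot
  · linear_combination hderiv₂
  · linear_combination hderiv₀

namespace IsScrollarGenerator

variable (h : IsScrollarGenerator k x θ 3 4 a b c d)

include h

lemma natDegree_a_le_two : a.natDegree ≤ 2 := by have := h.natDegree_a_add_le; lia

lemma natDegree_d_le_five : d.natDegree ≤ 5 := by have := h.natDegree_d_add_le; lia

lemma isCubicGenerator_reflect : IsCubicGenerator k x⁻¹ (θ * x⁻¹) (reflect 2 a) (reflect 3 b)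
    (reflect 4 c) (reflect 5 d) := by
  simpa using h.atInfinity

lemma eq_smul_of_isSingAt_quintic {P : Fin 3 → k} (hP : IsSingAt k (quintic a b c d) P) :
    ∃ r : k, P = r • ![0, 0, 1] := by
  have ha := h.natDegree_a_le_two
  have hd := h.natDegree_d_le_five
  have hP₁ : P 1 = 0 := by
    by_contra hP₁
    exact h.isCubicBasis.not_isSingAt_quintic ha h.natDegree_b_le h.natDegree_c_le hd hP₁ hP
  have hP₀ : P 0 = 0 := by
    by_contra hP₀
    have hswap := isSingAt_rename hP (Equiv.swap 0 1)
    rw [rename_swap_quintic] at hswap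
    exact h.isCubicGenerator_reflect.isCubicBasis.not_isSingAt_quintic
      (natDegree_reflect_le_of_le ha) (natDegree_reflect_le_of_le h.natDegree_b_le)
      (natDegree_reflect_le_of_le h.natDegree_c_le) (natDegree_reflect_le_of_le hd)
      (by simpa using hP₀) hswap
  refine ⟨P 2, ?_⟩
  ext i
  fin_cases i <;> simp [hP₀, hP₁]

end IsScrollarGenerator

end Trigonal

end PlaneQuintics

section NodesAndCusps

variable {k K : Type*} [Field k] [Field K] [Algebra k K] {x α β θ : K} {a b c d p : k[X]}

lemma exists_eq_mul_of_natDegree_le_two [IsAlgClosed k] (hp : p.natDegree ≤ 2) :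
    ∃ q r : k[X], q.natDegree ≤ 1 ∧ r.natDegree ≤ 1 ∧ p = q * r := by
  rcases le_or_gt p.natDegree 1 with hp₁ | hp₁
  · exact ⟨p, 1, hp₁, by simp, (mul_one p).symm⟩
  · obtain ⟨c₀, hc₀⟩ := IsAlgClosed.exists_root p fun h₀ =>
      absurd (natDegree_eq_zero_iff_degree_le_zero.2 h₀.le) (by lia)
    obtain ⟨q, rfl⟩ := dvd_iff_isRoot.2 hc₀
    have hq : q ≠ 0 := by rintro rfl; simp at hp₁
    rw [natDegree_mul (X_sub_C_ne_zero c₀) hq, natDegree_X_sub_C] at hp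
    exact ⟨X - C c₀, q, by rw [natDegree_X_sub_C], by lia, rfl⟩

lemma IsCubicBasis.not_homogenize_dvd (h : IsCubicBasis k x α β (p ^ 2) b c d)
    (hp : p.natDegree ≤ 1) (hb : b.natDegree ≤ 3) {c₀ : k} (hroot : p.IsRoot c₀) :
    ¬ p.homogenize 1 ∣ b.homogenize 3 := fun hdvd => by
  have hpb : p ∣ b := by
    simpa [aeval_homogenize_X_one, hp, hb] using _root_.map_dvd
      (MvPolynomial.aeval ![X, (1 : k[X])]) hdvd
  exact h.eval_b_ne_zero (c₀ := c₀) (by simp [hroot.eq_zero])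
    (by simp [derivative_pow, hroot.eq_zero]) (hroot.dvd hpb)

namespace IsScrollarGenerator

lemma not_homogenize_dvd (h : IsScrollarGenerator k x θ 3 4 (p ^ 2) b c d)
    (hp : p.natDegree ≤ 1) : ¬ p.homogenize 1 ∣ b.homogenize 3 := fun hdvd => by
  by_cases hcoeff : p.coeff 1 = 0
  swap
  · obtain ⟨c₀, hc₀⟩ := exists_root_of_degree_eq_one
      (degree_eq_of_le_of_coeff_ne_zero (natDegree_le_iff_degree_le.1 hp) hcoeff)
    exact h.isCubicBasis.not_homogenize_dvd hp h.natDegree_b_le hc₀ hdvd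
  have hsq : reflect 2 (p ^ 2) = reflect 1 p ^ 2 := by
    rw [pow_two, pow_two, ← reflect_mul p p hp hp]
  have hinf := h.isCubicGenerator_reflect.isCubicBasis
  rw [hsq] at hinf
  have hswap := _root_.map_dvd (MvPolynomial.rename (Equiv.swap (0 : Fin 2) 1)) hdvd
  rw [rename_swap_homogenize, rename_swap_homogenize] at hswap
  refine hinf.not_homogenize_dvd (natDegree_reflect_le_of_le hp)
    (natDegree_reflect_le_of_le h.natDegree_b_le) (c₀ := 0) ?_ hswap
  rw [IsRoot.def, ← coeff_zero_eq_eval_zero, coeff_reflect, revAt_zero, hcoeff]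

lemma nodeAtOrigin_or_cuspAtOrigin [IsAlgClosed k] (h : IsScrollarGenerator k x θ 3 4 a b c d) :
    NodeAtOrigin k (dehomZ k (quintic a b c d)) ∨ CuspAtOrigin k (dehomZ k (quintic a b c d)) := by
  obtain ⟨p, q, hp, hq, rfl⟩ := exists_eq_mul_of_natDegree_le_two h.natDegree_a_le_two
  have hpq := h.isCubicBasis.leading_ne_zero
  have hne {r : k[X]} (hr : r.natDegree ≤ 1) (hr₀ : r ≠ 0) : r.homogenize 1 ≠ 0 :=
    mt (homogenize_eq_zero_iff hr).1 hr₀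
  by_cases hprop : ∃ s : k, q.homogenize 1 = s • p.homogenize 1
  · right
    obtain ⟨s, hs⟩ := hprop
    obtain ⟨r, rfl⟩ := IsAlgClosed.exists_pow_nat_eq s two_pos
    obtain rfl : q = r ^ 2 • p := by
      have hq₁ := congrArg (MvPolynomial.aeval ![X, (1 : k[X])]) hs
      rwa [map_smul, aeval_homogenize_X_one q hq, aeval_homogenize_X_one p hp] at hq₁
    have hsq : p * r ^ 2 • p = (r • p) ^ 2 := by simp only [smul_eq_C_mul, map_pow]; ring
    rw [hsq] at h hpq ⊢
    have hrp : (r • p).natDegree ≤ 1 := (natDegree_smul_le r p).trans hp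
    refine ⟨(r • p).homogenize 1, isHomogeneous_homogenize _,
      hne hrp ((pow_ne_zero_iff two_ne_zero).1 hpq), ?_, ?_⟩
    · rw [homogeneousComponent_two_dehomZ_quintic, pow_two, pow_two, ← homogenize_mul _ _ hrp hrp]
    · rw [homogeneousComponent_three_dehomZ_quintic, dvd_neg]
      exact h.not_homogenize_dvd hrp
  · left
    exact ⟨p.homogenize 1, q.homogenize 1, isHomogeneous_homogenize p, isHomogeneous_homogenize q,
      hne hp (left_ne_zero_of_mul hpq), hne hq (right_ne_zero_of_mul hpq),
      by rw [homogeneousComponent_two_dehomZ_quintic, ← homogenize_mul p q hp hq],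
      not_exists.1 hprop⟩

end IsScrollarGenerator

end NodesAndCusps

section AffineCharts

section Chart

variable {k A : Type*} [CommRing k] [CommRing A] [Algebra k A]

/-- The restriction of ternary forms in `X, Y, Z` to the affine chart `Y = 1`, as polynomials in `Z`
over `k[X]`. -/
def chartMap (k : Type*) [CommRing k] : MvPolynomial (Fin 3) k →ₐ[k] k[X][X] :=
  MvPolynomial.aeval ![C X, 1, X]

lemma aevalAeval_chartMap (x z : A) (F : MvPolynomial (Fin 3) k) :
    aevalAeval x z (chartMap k F) = MvPolynomial.aeval ![x, 1, z] F := by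
  have hcomp : (aevalAeval x z).comp (chartMap k) = MvPolynomial.aeval ![x, 1, z] :=
    MvPolynomial.algHom_ext fun i => by fin_cases i <;> simp [chartMap]
  exact DFunLike.congr_fun hcomp F

lemma chartMap_rename_homogenize {p : k[X]} {n : ℕ} (hp : p.natDegree ≤ n) :
    chartMap k (MvPolynomial.rename Fin.castSucc (p.homogenize n)) = C p := by
  rw [chartMap, MvPolynomial.aeval_rename, aeval_homogenize_of_eq_one hp _ rfl]
  exact (aeval_algebraMap_apply k[X][X] X p).trans (by simp)

lemma eval_eq_eval_dehomZ (F : MvPolynomial (Fin 3) k) {P : Fin 3 → k} (hP : P 2 = 1) :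
    MvPolynomial.eval P F = MvPolynomial.eval (P ∘ Fin.castSucc) (dehomZ k F) := by
  rw [← MvPolynomial.aeval_eq_eval, ← MvPolynomial.aeval_eq_eval]
  simp only [dehomZ]
  rw [← AlgHom.comp_apply]
  congr 1
  exact MvPolynomial.algHom_ext fun i => by fin_cases i <;> simp [hP]

lemma exists_isHomogeneous_chartMap_eq (g : k[X][X]) : ∃ N, ∀ n ≥ N,
    ∃ G : MvPolynomial (Fin 3) k, G.IsHomogeneous n ∧ chartMap k G = g := by
  induction g using Polynomial.induction_on' with
  | add g h hg hh =>
    obtain ⟨M, hM⟩ := hg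
    obtain ⟨N, hN⟩ := hh
    refine ⟨max M N, fun n hn => ?_⟩
    obtain ⟨G, hG, rfl⟩ := hM n ((le_max_left M N).trans hn)
    obtain ⟨H, hH, rfl⟩ := hN n ((le_max_right M N).trans hn)
    exact ⟨G + H, hG.add hH, map_add _ G H⟩
  | monomial i p =>
    refine ⟨p.natDegree + i, fun n hn => ⟨MvPolynomial.rename Fin.castSucc (p.homogenize (n - i)) *
      MvPolynomial.X 2 ^ i, ?_, ?_⟩⟩
    · simpa [show n - i + i = n by lia] using
        (isHomogeneous_homogenize p (n := n - i)).rename_isHomogeneous.mul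
          (MvPolynomial.isHomogeneous_X_pow (2 : Fin 3) i)
    · rw [map_mul, map_pow, chartMap_rename_homogenize (by lia), ← C_mul_X_pow_eq_monomial]
      simp [chartMap]

end Chart

section Irreducible

variable {k : Type*} [Field k] [Infinite k] {F G : MvPolynomial (Fin 3) k} {n : ℕ}

lemma eq_of_chartMap_eq (hF : F.IsHomogeneous n) (hG : G.IsHomogeneous n)
    (h : chartMap k F = chartMap k G) : F = G := by
  refine eq_of_eval_eq_of_apply_eq_one 1 hF hG fun P hP => ?_
  have hvec : P = ![P 0, 1, P 2] := by ext i; fin_cases i <;> simp [hP]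
  rw [hvec, ← MvPolynomial.aeval_eq_eval]
  simp only [← aevalAeval_chartMap, h]

lemma eq_of_dehomZ_eq (hF : F.IsHomogeneous n) (hG : G.IsHomogeneous n)
    (h : dehomZ k F = dehomZ k G) : F = G := by
  refine eq_of_eval_eq_of_apply_eq_one 2 hF hG fun P hP => ?_
  rw [eval_eq_eval_dehomZ F hP, eval_eq_eval_dehomZ G hP, h]

lemma irreducible_chartMap (hF : F.IsHomogeneous n) (hirr : Irreducible F)
    (hunit : ¬ IsUnit (chartMap k F)) : Irreducible (chartMap k F) := by
  have hne : chartMap k F ≠ 0 := fun h₀ =>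
    hirr.ne_zero (eq_of_chartMap_eq hF (MvPolynomial.isHomogeneous_zero _ _ n) (by simpa using h₀))
  have isUnit_of_dvd {g h : k[X][X]} (hgh : chartMap k F = g * h) (hdvd : chartMap k F ∣ g) :
      IsUnit h := by
    obtain ⟨e, rfl⟩ := hdvd
    exact .of_mul_eq_one e (mul_left_cancel₀ hne (by linear_combination -hgh))
  refine ⟨hunit, fun g h hgh => ?_⟩
  obtain ⟨M, hM⟩ := exists_isHomogeneous_chartMap_eq g
  obtain ⟨N, hN⟩ := exists_isHomogeneous_chartMap_eq h
  obtain ⟨G, hG, rfl⟩ := hM (M + n) (by lia)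
  obtain ⟨H, hH, rfl⟩ := hN N le_rfl
  have hGH : G * H = F * MvPolynomial.X 1 ^ (M + N) := by
    refine eq_of_chartMap_eq (hG.mul hH) (n := M + n + N) ?_ ?_
    · simpa [show n + (M + N) = M + n + N by lia] using
        hF.mul (MvPolynomial.isHomogeneous_X_pow (1 : Fin 3) (M + N))
    · rw [map_mul, ← hgh, map_mul, map_pow]
      simp [chartMap]
  rcases hirr.prime.dvd_or_dvd ⟨_, hGH⟩ with hdvd | hdvd
  · exact .inr (isUnit_of_dvd hgh (_root_.map_dvd _ hdvd))
  · exact .inl (isUnit_of_dvd (hgh.trans (mul_comm _ _)) (_root_.map_dvd _ hdvd))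

lemma irreducible_of_irreducible_chartMap (hF : F.IsHomogeneous n)
    (hirr : Irreducible (chartMap k F)) (hX : ¬ MvPolynomial.X 1 ∣ F) : Irreducible F := by
  have hF₀ : F ≠ 0 := by rintro rfl; exact hirr.ne_zero (map_zero _)
  have isUnit_of_dvd {G : MvPolynomial (Fin 3) k} (hGF : G ∣ F) (hG : IsUnit (chartMap k G)) :
      IsUnit G := by
    obtain ⟨m, hm⟩ := exists_isHomogeneous_of_dvd hF hF₀ hGF
    obtain ⟨p, hp, hpG⟩ := Polynomial.isUnit_iff.1 hG
    obtain ⟨r, hr, rfl⟩ := Polynomial.isUnit_iff.1 hp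
    obtain rfl : G = MvPolynomial.C r * MvPolynomial.X 1 ^ m := by
      have hform := (MvPolynomial.isHomogeneous_X_pow (R := k) (1 : Fin 3) m).C_mul r
      exact eq_of_chartMap_eq hm hform (by rw [← hpG]; simp [chartMap])
    rcases m with - | m
    · simpa using hr
    · exact absurd (((dvd_pow_self _ m.succ_ne_zero).mul_left _).trans hGF) hX
  refine ⟨fun h => hirr.not_isUnit (h.map _), fun G H hGH => ?_⟩
  exact (hirr.isUnit_or_isUnit (by rw [hGH, map_mul])).imp
    (isUnit_of_dvd ⟨H, hGH⟩) (isUnit_of_dvd ⟨G, hGH.trans (mul_comm G H)⟩)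

end Irreducible

section AffineCubic

variable {k : Type*} [CommRing k] {a b c d : k[X]}

/-- The cubic `a T ^ 3 - b T ^ 2 + c T - d` in the variable `T`; it is the equation of
`quintic a b c d` in the chart `Y = 1`. -/
def affineCubic (a b c d : k[X]) : k[X][X] := C a * X ^ 3 - C b * X ^ 2 + C c * X - C d

lemma chartMap_quintic (ha : a.natDegree ≤ 2) (hb : b.natDegree ≤ 3) (hc : c.natDegree ≤ 4)
    (hd : d.natDegree ≤ 5) : chartMap k (quintic a b c d) = affineCubic a b c d := by
  have hX : chartMap k (MvPolynomial.X 2) = X := by simp [chartMap]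
  simp only [quintic, affineCubic, map_sub, map_add, map_mul, map_pow, hX,
    chartMap_rename_homogenize, ha, hb, hc, hd]

end AffineCubic

end AffineCharts

section TrigonalToQuintic

variable {k K : Type*} [Field k] [Field K] [Algebra k K] {x θ : K} {a b c d : k[X]}

lemma natDegree_affineCubic (ha : a ≠ 0) : (affineCubic a b c d).natDegree = 3 := by
  unfold affineCubic
  compute_degree!

lemma aevalAeval_affineCubic (x θ : K) : aevalAeval x θ (affineCubic a b c d) =
    aeval x a * θ ^ 3 - aeval x b * θ ^ 2 + aeval x c * θ - aeval x d := by
  simp [affineCubic]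

lemma IsCubicGenerator.irreducible_affineCubic [IsAlgClosed k]
    (h : IsCubicGenerator k x θ a b c d) : Irreducible (affineCubic a b c d) := by
  have hdeg := natDegree_affineCubic (b := b) (c := c) (d := d) h.isCubicBasis.leading_ne_zero
  have hne : affineCubic a b c d ≠ 0 := by rintro h₀; simp [h₀] at hdeg
  have isUnit_of_root {f g : k[X][X]} (hfg : affineCubic a b c d = f * g)
      (hf : aevalAeval x θ f = 0) : IsUnit g := by
    rw [hfg] at hne hdeg
    have hf₂ : 2 < f.natDegree := by
      by_contra! hf₂
      have hsum := f.as_sum_range' 3 (by lia)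
      simp only [Finset.sum_range_succ, Finset.sum_range_zero, zero_add, ← C_mul_X_pow_eq_monomial]
        at hsum
      obtain ⟨h₀, h₁, h₂⟩ := h.eq_zero (f.coeff 0) (f.coeff 1) (f.coeff 2) (by
        rw [← hf]; conv_rhs => rw [hsum]
        simp)
      rw [h₀, h₁, h₂] at hsum
      exact left_ne_zero_of_mul hne (by simpa using hsum)
    rw [natDegree_mul (left_ne_zero_of_mul hne) (right_ne_zero_of_mul hne)] at hdeg
    obtain ⟨u, rfl⟩ := natDegree_eq_zero.1 (show g.natDegree = 0 by lia)
    have hu := (C_dvd_iff_dvd_coeff _ _).1 (Dvd.intro_left f hfg.symm)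
    have ha : u ∣ a := by simpa [affineCubic, coeff_X, coeff_C] using hu 3
    have hb : u ∣ b := by simpa [affineCubic, coeff_X, coeff_C] using hu 2
    have hc : u ∣ c := by simpa [affineCubic, coeff_X, coeff_C] using hu 1
    have hd : u ∣ d := by simpa [affineCubic, coeff_X, coeff_C] using hu 0
    obtain ⟨p, q, r, s, hpqrs⟩ := h.isCubicBasis.exists_bezout
    rw [isUnit_C]
    apply isUnit_of_dvd_one
    rw [← hpqrs]
    exact (((ha.mul_left p).add (hb.mul_left q)).add (hc.mul_left r)).add (hd.mul_left s)
  refine ⟨fun hunit => ?_, fun f g hfg => ?_⟩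
  · rw [natDegree_eq_zero_of_isUnit hunit] at hdeg
    exact absurd hdeg (by decide)
  have hroot := (aevalAeval_affineCubic x θ).trans h.root
  rw [hfg, map_mul, mul_eq_zero] at hroot
  exact hroot.symm.imp (isUnit_of_root (hfg.trans (mul_comm f g))) (isUnit_of_root hfg)

namespace IsScrollarGenerator

variable (h : IsScrollarGenerator k x θ 3 4 a b c d)

include h

lemma irreducible_quintic [IsAlgClosed k] : Irreducible (quintic a b c d) := by
  have ha := h.natDegree_a_le_two
  have hb := h.natDegree_b_le
  have hc := h.natDegree_c_le
  have hd := h.natDegree_d_le_five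
  have hinf := h.isCubicGenerator_reflect
  refine irreducible_of_irreducible_chartMap (isHomogeneous_quintic a b c d)
    (by rw [chartMap_quintic ha hb hc hd]; exact h.toIsCubicGenerator.irreducible_affineCubic)
    fun hX => ?_
  have hprim := hinf.irreducible_affineCubic.isPrimitive
    (by rw [natDegree_affineCubic hinf.isCubicBasis.leading_ne_zero]; decide)
  have hdvd := _root_.map_dvd ((chartMap k).comp (MvPolynomial.rename (Equiv.swap 0 1))) hX
  rw [AlgHom.comp_apply, AlgHom.comp_apply, rename_swap_quintic,
    chartMap_quintic (natDegree_reflect_le_of_le ha) (natDegree_reflect_le_of_le hb)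
      (natDegree_reflect_le_of_le hc) (natDegree_reflect_le_of_le hd)] at hdvd
  exact not_isUnit_X (hprim X (by simpa [chartMap] using hdvd))

end IsScrollarGenerator

lemma adjoin_inv_mul_inv (hθ : θ ≠ 0) : k⟮θ⁻¹ * x, θ⁻¹⟯ = k⟮x, θ⟯ := by
  refine le_antisymm (adjoin_le_iff.2 ?_) (adjoin_le_iff.2 ?_)
  · have hx : x ∈ k⟮x, θ⟯ := subset_adjoin k _ (by simp)
    have hθ : θ ∈ k⟮x, θ⟯ := subset_adjoin k _ (by simp)
    exact Set.pair_subset (mul_mem (inv_mem hθ) hx) (inv_mem hθ)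
  · have hx : θ⁻¹ * x ∈ k⟮θ⁻¹ * x, θ⁻¹⟯ := subset_adjoin k _ (by simp)
    have hθ' : θ ∈ k⟮θ⁻¹ * x, θ⁻¹⟯ := inv_mem_iff.1 (subset_adjoin k _ (by simp))
    exact Set.pair_subset (by simpa [hθ] using mul_mem hθ' hx) hθ'

lemma IsCubicGenerator.adjoin_eq_top (h : IsCubicGenerator k x θ a b c d) : k⟮x, θ⟯ = ⊤ := by
  have hx : x ∈ k⟮x, θ⟯ := subset_adjoin k _ (by simp)
  have hθ : θ ∈ k⟮x, θ⟯ := subset_adjoin k _ (by simp)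
  have haeval (p : k[X]) : aeval x p ∈ k⟮x, θ⟯ := aeval_mem (A := k⟮x, θ⟯.toSubalgebra) hx p
  have := h.isCubicBasis.isTrigonalMap.finiteDimensional
  refine eq_top_iff.2 fun z _ => ?_
  obtain ⟨D, hD, hz⟩ := exists_aeval_mul_mem_affineRing (k := k) x z
  obtain ⟨p, q, r, hpqr⟩ := h.exists_eq hz
  rw [← eq_inv_mul_iff_mul_eq₀ hD] at hpqr
  rw [hpqr]
  exact mul_mem (inv_mem (haeval D)) (add_mem (add_mem (haeval p) (mul_mem (haeval q) hθ))
    (mul_mem (haeval r) (mul_mem (haeval a) (pow_mem hθ 2))))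

lemma aeval_dehomZ {F : MvPolynomial (Fin 3) k} {n : ℕ} (hF : F.IsHomogeneous n) (hθ : θ ≠ 0) :
    MvPolynomial.aeval ![θ⁻¹ * x, θ⁻¹] (dehomZ k F) =
      θ⁻¹ ^ n * aevalAeval x θ (chartMap k F) := by
  rw [aevalAeval_chartMap, ← aeval_smul_of_isHomogeneous hF, dehomZ, ← AlgHom.comp_apply]
  congr 1
  exact MvPolynomial.algHom_ext fun i => by fin_cases i <;> simp [hθ]

theorem hasPlaneQuinticModel_of_trigonal [IsAlgClosed k] (ht : Trigonal k K)
    (hg : HasGenusFive k K) : HasPlaneQuinticModel k K := by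
  obtain ⟨x, θ, a, b, c, d, h⟩ := exists_isScrollarGenerator ht hg
  refine ⟨quintic a b c d, isHomogeneous_quintic a b c d, h.irreducible_quintic,
    isSingAt_quintic_origin a b c d, fun P _ hP => h.eq_smul_of_isSingAt_quintic hP,
    h.nodeAtOrigin_or_cuspAtOrigin, θ⁻¹ * x, θ⁻¹, ?_, ?_⟩
  · rw [adjoin_inv_mul_inv h.ne_zero, h.toIsCubicGenerator.adjoin_eq_top]
  · rw [aeval_dehomZ (isHomogeneous_quintic a b c d) h.ne_zero, chartMap_quintic
      h.natDegree_a_le_two h.natDegree_b_le h.natDegree_c_le h.natDegree_d_le_five,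
      aevalAeval_affineCubic, h.root, mul_zero]

end TrigonalToQuintic

section DoublePoints

lemma totalDegree_aeval_le {σ τ R : Type*} [CommSemiring R] (F : MvPolynomial σ R)
    {g : σ → MvPolynomial τ R} (hg : ∀ i, (g i).totalDegree ≤ 1) :
    (MvPolynomial.aeval g F).totalDegree ≤ F.totalDegree := by
  conv_lhs => rw [F.as_sum, map_sum]
  refine (MvPolynomial.totalDegree_finsetSum _ _).trans (Finset.sup_le fun u hu => ?_)
  rw [MvPolynomial.aeval_monomial]
  calc _ ≤ 0 + ∑ i ∈ u.support, u i * 1 :=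
        (MvPolynomial.totalDegree_mul _ _).trans <| add_le_add (MvPolynomial.totalDegree_C _).le <|
          (MvPolynomial.totalDegree_finsetProd _ _).trans <| Finset.sum_le_sum fun i _ =>
            (MvPolynomial.totalDegree_pow _ _).trans (Nat.mul_le_mul_left _ (hg i))
    _ ≤ F.totalDegree := by simpa [Finsupp.sum] using MvPolynomial.le_totalDegree hu

section SingularAtOrigin

variable {k : Type*} [CommRing k] {F : MvPolynomial (Fin 3) k}

lemma totalDegree_dehomZ_le (F : MvPolynomial (Fin 3) k) :
    (dehomZ k F).totalDegree ≤ F.totalDegree :=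
  totalDegree_aeval_le F fun i => by
    fin_cases i <;> simp [(MvPolynomial.isHomogeneous_X k _).totalDegree_le]

lemma pderiv_dehomZ (i : Fin 2) (F : MvPolynomial (Fin 3) k) :
    MvPolynomial.pderiv i (dehomZ k F) = dehomZ k (MvPolynomial.pderiv i.castSucc F) := by
  unfold dehomZ
  induction F using MvPolynomial.induction_on with
  | C r => simp
  | add F G hF hG => rw [map_add, map_add, map_add, map_add, hF, hG]
  | mul_X F j hF =>
    simp only [map_mul, MvPolynomial.pderiv_mul, hF, map_add, MvPolynomial.aeval_X]
    congr 2
    fin_cases i <;> fin_cases j <;> simp [MvPolynomial.pderiv_X]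

lemma homogeneousComponent_dehomZ_eq_zero (hs : IsSingAt k F ![0, 0, 1]) {n : ℕ} (hn : n < 2) :
    MvPolynomial.homogeneousComponent n (dehomZ k F) = 0 := by
  have heval (G : MvPolynomial (Fin 3) k) :
      MvPolynomial.eval ![0, 0, 1] G = MvPolynomial.coeff 0 (dehomZ k G) := by
    have hvec : (![0, 0, 1] : Fin 3 → k) ∘ Fin.castSucc = 0 := by ext i; fin_cases i <;> rfl
    rw [eval_eq_eval_dehomZ G rfl, hvec, MvPolynomial.eval_zero, MvPolynomial.constantCoeff_eq]
  have hsingle (i : Fin 2) : MvPolynomial.coeff (Finsupp.single i 1) (dehomZ k F) = 0 := by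
    have := hs.2 i.castSucc
    rwa [heval, ← pderiv_dehomZ, MvPolynomial.coeff_pderiv, zero_add, Finsupp.zero_apply,
      Nat.cast_zero, zero_add, mul_one] at this
  ext u
  rw [MvPolynomial.coeff_homogeneousComponent, MvPolynomial.coeff_zero]
  refine ite_eq_right_iff.2 fun hu => ?_
  interval_cases n
  · rw [(Finsupp.degree_eq_zero_iff u).1 hu, ← heval, hs.1]
  · obtain ⟨i, rfl⟩ := (Finsupp.sum_eq_one_iff u).1 hu
    exact hsingle i

lemma exists_homogenize_eq {G : MvPolynomial (Fin 2) k} {n : ℕ} (hG : G.IsHomogeneous n) :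
    ∃ p : k[X], p.natDegree ≤ n ∧ p.homogenize n = G := by
  refine ⟨MvPolynomial.aeval ![X, 1] G, ?_, homogenize_eq_of_isHomogeneous hG rfl⟩
  simpa using MvPolynomial.aeval_natDegree_le G hG.totalDegree_le ![X, (1 : k[X])] (n := 1)
    (fun i => by fin_cases i <;> simp [natDegree_X_le])

end SingularAtOrigin

lemma exists_eq_quintic {k : Type*} [Field k] [Infinite k] {F : MvPolynomial (Fin 3) k}
    (hF : F.IsHomogeneous 5) (hs : IsSingAt k F ![0, 0, 1]) :
    ∃ a b c d : k[X], a.natDegree ≤ 2 ∧ b.natDegree ≤ 3 ∧ c.natDegree ≤ 4 ∧ d.natDegree ≤ 5 ∧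
      F = quintic a b c d := by
  have hcomp (n : ℕ) : ∃ p : k[X], p.natDegree ≤ n ∧
      p.homogenize n = MvPolynomial.homogeneousComponent n (dehomZ k F) :=
    exists_homogenize_eq (MvPolynomial.homogeneousComponent_isHomogeneous n _)
  obtain ⟨a, ha, ha'⟩ := hcomp 2
  obtain ⟨b, hb, hb'⟩ := hcomp 3
  obtain ⟨c, hc, hc'⟩ := hcomp 4
  obtain ⟨d, hd, hd'⟩ := hcomp 5
  refine ⟨a, -b, c, -d, ha, by rwa [natDegree_neg], hc, by rwa [natDegree_neg],
    eq_of_dehomZ_eq hF (isHomogeneous_quintic _ _ _ _) ?_⟩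
  have hdeg : (dehomZ k F).totalDegree ≤ 5 := (totalDegree_dehomZ_le F).trans hF.totalDegree_le
  have hsum : ∑ i ∈ Finset.range 6, MvPolynomial.homogeneousComponent i (dehomZ k F) =
      dehomZ k F := by
    conv_rhs => rw [← MvPolynomial.sum_homogeneousComponent (dehomZ k F)]
    refine (Finset.sum_subset (Finset.range_subset_range.2 (by lia)) fun i _ hi => ?_).symm
    exact MvPolynomial.homogeneousComponent_eq_zero i _ (by simpa using hi)
  simp only [Finset.sum_range_succ, Finset.sum_range_zero, zero_add, ← ha', ← hb', ← hc', ← hd',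
    homogeneousComponent_dehomZ_eq_zero hs (show 0 < 2 by decide),
    homogeneousComponent_dehomZ_eq_zero hs (show 1 < 2 by decide)] at hsum
  rw [dehomZ_quintic, homogenize_neg, homogenize_neg, sub_neg_eq_add, sub_neg_eq_add, hsum]

end DoublePoints

section QuinticToTrigonal

variable {k K : Type*} [Field k] [Field K] [Algebra k K] {t θ x y : K} {a b c d : k[X]}

lemma aeval_mapAlgHom_aeval {L : Type*} [CommRing L] [Algebra k L] [Algebra L K]
    [IsScalarTower k L K] (s : L) (θ : K) (f : k[X][X]) :
    aeval θ (mapAlgHom (aeval s) f) = aevalAeval (algebraMap L K s) θ f := by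
  induction f using Polynomial.induction_on' with
  | add f g hf hg => rw [map_add, map_add, map_add, hf, hg]
  | monomial n p => simp [aeval_algebraMap_apply, aeval_monomial]

lemma irreducible_mapAlgHom_aeval_gen (ht : Transcendental k t) {f : k[X][X]}
    (hf : Irreducible f) (hdeg : f.natDegree ≠ 0) :
    Irreducible (mapAlgHom (aeval (AdjoinSimple.gen k t)) f) := by
  have hrat := ((hf.isPrimitive hdeg).irreducible_iff_irreducible_map_fraction_map
    (K := RatFunc k)).1 hf
  let e := RatFunc.algEquivOfTranscendental t ht
  rw [← MulEquiv.irreducible_iff (mapEquiv e.toRingEquiv), mapEquiv_apply, Polynomial.map_map]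
    at hrat
  convert hrat
  ext
  simp [e]

lemma finrank_adjoin_simple_of_irreducible (ht : Transcendental k t) {f : k[X][X]}
    (hf : Irreducible f) (hdeg : f.natDegree ≠ 0) (hroot : aevalAeval t θ f = 0)
    (htop : k⟮t, θ⟯ = ⊤) : Module.finrank k⟮t⟯ K = f.natDegree := by
  have hirr := irreducible_mapAlgHom_aeval_gen ht hf hdeg
  have hroot' := (aeval_mapAlgHom_aeval (AdjoinSimple.gen k t) θ f).trans hroot
  have hadjoin : k⟮t⟯⟮θ⟯ = ⊤ := by
    rw [← restrictScalars_eq_top_iff (K := k), adjoin_simple_adjoin_simple, htop]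
  have hinj : Function.Injective (aeval (AdjoinSimple.gen k t) : k[X] →ₐ[k] k⟮t⟯) :=
    transcendental_iff_injective.1
      (by rwa [← transcendental_algebraMap_iff (algebraMap k⟮t⟯ K).injective])
  rw [← finrank_top', ← hadjoin, adjoin.finrank (IsAlgebraic.isIntegral ⟨_, hirr.ne_zero, hroot'⟩),
    ← minpoly.eq_of_irreducible hirr hroot',
    natDegree_mul_C (inv_ne_zero (leadingCoeff_ne_zero.2 hirr.ne_zero))]
  exact natDegree_map_eq_of_injective hinj f

lemma adjoin_ne_top_of_isIntegral [Algebra.Transcendental k K] {S : Set K}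
    (hS : ∀ s ∈ S, IsIntegral k s) : adjoin k S ≠ ⊤ := fun htop => by
  have halg : Algebra.IsAlgebraic k (adjoin k S) := isAlgebraic_adjoin hS
  rw [htop, (topEquiv (F := k) (E := K)).isAlgebraic_iff] at halg
  exact Algebra.transcendental_iff_not_isAlgebraic.1 inferInstance halg

lemma transcendental_of_adjoin_pair_eq_top [IsAlgClosed k] [Algebra.Transcendental k K]
    {f : k[X][X]} (hf : Irreducible f) (hdeg : f.natDegree ≠ 0) (hroot : aevalAeval t θ f = 0)
    (htop : k⟮t, θ⟯ = ⊤) : Transcendental k t := by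
  intro ht
  obtain ⟨r, rfl⟩ := minpoly.mem_range_of_degree_eq_one k t
    (IsAlgClosed.degree_eq_one_of_irreducible k (minpoly.irreducible ht.isIntegral))
  have hθ : Transcendental k θ := fun hθ => adjoin_ne_top_of_isIntegral
    (by simpa using ⟨isIntegral_algebraMap, hθ.isIntegral⟩) htop
  have hmap : mapAlgHom (aeval r) f = 0 := by
    by_contra hne
    exact hθ ⟨_, hne, (aeval_mapAlgHom_aeval r θ f).trans hroot⟩
  have hdvd : C (X - C r) ∣ f := (C_dvd_iff_dvd_coeff _ _).2 fun i => by
    rw [dvd_iff_isRoot, IsRoot, ← coe_aeval_eq_eval]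
    simpa using congrArg (coeff · i) hmap
  exact not_isUnit_X_sub_C r (hf.isPrimitive hdeg _ hdvd)

lemma trigonal_of_irreducible_quintic [IsAlgClosed k] [Algebra.Transcendental k K]
    (ha₀ : a ≠ 0) (ha : a.natDegree ≤ 2) (hb : b.natDegree ≤ 3) (hc : c.natDegree ≤ 4)
    (hd : d.natDegree ≤ 5) (hF : Irreducible (quintic a b c d)) (hy : y ≠ 0)
    (htop : k⟮x, y⟯ = ⊤) (hroot : MvPolynomial.aeval ![x, y] (dehomZ k (quintic a b c d)) = 0) :
    Trigonal k K := by
  obtain ⟨θ, rfl⟩ : ∃ θ, θ⁻¹ = y := ⟨y⁻¹, inv_inv y⟩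
  replace hy := inv_eq_zero.not.1 hy
  obtain ⟨t, rfl⟩ : ∃ t, θ⁻¹ * t = x := ⟨θ * x, inv_mul_cancel_left₀ hy x⟩
  have hdeg := natDegree_affineCubic (b := b) (c := c) (d := d) ha₀
  have hchart := chartMap_quintic ha hb hc hd
  have hirr := irreducible_chartMap (isHomogeneous_quintic a b c d) hF fun hunit => by
    rw [hchart] at hunit
    exact absurd (hdeg.symm.trans (natDegree_eq_zero_of_isUnit hunit)) (by decide)
  rw [aeval_dehomZ (isHomogeneous_quintic a b c d) hy, mul_eq_zero_iff_left
    (pow_ne_zero 5 (inv_ne_zero hy))] at hroot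
  rw [hchart] at hirr hroot
  rw [adjoin_inv_mul_inv hy] at htop
  have hdeg₀ : (affineCubic a b c d).natDegree ≠ 0 := by rw [hdeg]; decide
  have ht := transcendental_of_adjoin_pair_eq_top hirr hdeg₀ hroot htop
  exact ⟨t, ht, (finrank_adjoin_simple_of_irreducible ht hirr hdeg₀ hroot htop).trans hdeg⟩

lemma aeval_dehomZ_rename_swap (x y : K) (F : MvPolynomial (Fin 3) k) :
    MvPolynomial.aeval ![y, x] (dehomZ k (MvPolynomial.rename (Equiv.swap 0 1) F)) =
      MvPolynomial.aeval ![x, y] (dehomZ k F) := by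
  rw [dehomZ, dehomZ, MvPolynomial.aeval_rename, ← AlgHom.comp_apply, ← AlgHom.comp_apply]
  congr 1
  exact MvPolynomial.algHom_ext fun i => by fin_cases i <;> simp [Equiv.swap_apply_def]

theorem trigonal_of_hasPlaneQuinticModel [IsAlgClosed k] [Algebra.Transcendental k K]
    (h : HasPlaneQuinticModel k K) : Trigonal k K := by
  obtain ⟨F, hF, hirr, hs, -, hnc, x, y, htop, hroot⟩ := h
  obtain ⟨a, b, c, d, ha, hb, hc, hd, rfl⟩ := exists_eq_quintic hF hs
  have ha₀ : a ≠ 0 := by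
    rintro rfl
    have hquad := homogeneousComponent_two_dehomZ_quintic (k := k) (a := 0) (b := b) (c := c)
      (d := d)
    rw [homogenize_zero] at hquad
    rcases hnc with ⟨l, m, -, -, hl, hm, hlm, -⟩ | ⟨l, -, hl, hl₂, -⟩
    · exact mul_ne_zero hl hm (hlm.symm.trans hquad)
    · exact pow_ne_zero 2 hl (hl₂.symm.trans hquad)
  by_cases hy : y = 0
  · have hx : x ≠ 0 := by
      rintro rfl
      exact adjoin_ne_top_of_isIntegral (by simp [hy, isIntegral_zero]) htop
    have hreflect := rename_swap_quintic a b c d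
    refine trigonal_of_irreducible_quintic (x := y) (by simpa using ha₀)
      (natDegree_reflect_le_of_le ha) (natDegree_reflect_le_of_le hb)
      (natDegree_reflect_le_of_le hc) (natDegree_reflect_le_of_le hd) ?_ hx
      (by rwa [Set.pair_comm]) ?_
    · rw [← hreflect]
      exact (MulEquiv.irreducible_iff
        (MvPolynomial.renameEquiv k (Equiv.swap (0 : Fin 3) 1))).2 hirr
    · rw [← hreflect, aeval_dehomZ_rename_swap, hroot]
  · exact trigonal_of_irreducible_quintic ha₀ ha hb hc hd hirr hy htop hroot

lemma transcendental_of_hasGenusFive [IsAlgClosed k] (hg : HasGenusFive k K) :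
    Algebra.Transcendental k K := by
  by_contra halg
  rw [Algebra.transcendental_iff_not_isAlgebraic, not_not] at halg
  have hsurj : Function.Surjective (algebraMap k K) :=
    IsAlgClosed.algebraMap_bijective_of_isIntegral.2
  have := nontrivial_of_hasGenusFive hg
  exact not_subsingleton Ω[K⁄k] (KaehlerDifferential.subsingleton_of_surjective k K hsurj)

end QuinticToTrigonal

end TrigonalCurve

theorem stmt_10_general (k K : Type*) [Field k] [IsAlgClosed k] [Field K] [Algebra k K]
    (hgenus : HasGenusFive k K) : Trigonal k K ↔ HasPlaneQuinticModel k K :=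
  have := TrigonalCurve.transcendental_of_hasGenusFive hgenus
  ⟨fun ht => TrigonalCurve.hasPlaneQuinticModel_of_trigonal ht hgenus,
    TrigonalCurve.trigonal_of_hasPlaneQuinticModel⟩

/-- a smooth projective curve C of genus 5 over an algebraically closed
field k — presented by its function field K, a finitely generated extension of k of
transcendence degree 1 with k algebraically closed in K, whose space of global regular
differentials has dimension 5 — is trigonal (admits a degree-3 map to P¹) if and only if
it can be represented as a plane quintic with precisely one singularity of delta
invariant 1 (a node or an ordinary cusp). -/
theorem stmt_10 (k K : Type*) [Field k] [IsAlgClosed k] [Field K] [Algebra k K]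
    (hff : ∃ x : K, Transcendental k x ∧
      FiniteDimensional (IntermediateField.adjoin k ({x} : Set K)) K)
    (hrel : ∀ a : K, IsAlgebraic k a → ∃ c : k, algebraMap k K c = a)
    (hgenus : HasGenusFive k K) :
    Trigonal k K ↔ HasPlaneQuinticModel k K :=
  stmt_10_general k K hgenus

end
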